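/- Under Assumption 2.1 and with the multiple empirical integrals I_k^{(n)} defined from the triangular array, let h = (h^{(k)})_{k≥0} ∈ H. Then there exists a nondecreasing sequence of positive integers K_n with K_n → ∞ such that lim_{m→∞} limsup_{n→∞} 𝔼[ ( Σ_{k=m+1}^{K_n} I_k^{(n)}(h^{(k)}) )² ] = 0. -/

import Mathlib

open MeasureTheory ProbabilityTheory Filter Topology
open scoped ENNReal NNReal

/-- **Assumption 2.1** of the paper, for data `(μ, a, P)`. -/
def Assumption21 {E : Type*} [MeasurableSpace E] (μ : Measure E) (a : ℕ → ℝ)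
    (P : ℕ → Measure E) : Prop :=
  μ Set.univ = ∞ ∧
  (∀ n : ℕ, 1 ≤ n → 0 < a n) ∧
  Tendsto a atTop atTop ∧
  Tendsto (fun n : ℕ => a n / n) atTop (𝓝 0) ∧
  (∀ B : Set E, MeasurableSet B → ∀ n : ℕ, 1 ≤ n →
    ENNReal.ofReal ((n : ℝ) / a n) * P n B ≤ ENNReal.ofReal (((n : ℝ) + 1) / a (n + 1)) * P (n + 1) B) ∧
  (∀ B : Set E, MeasurableSet B →
    Tendsto (fun n : ℕ => ENNReal.ofReal ((n : ℝ) / a n) * P n B) atTop (𝓝 (μ B)))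

/-- The positive (`true`) and negative (`false`) parts of the signed measure `√a · W_n`. -/
noncomputable def mixMeasure {E : Type*} [MeasurableSpace E] (P : Measure E) (n : ℕ)
    (X : Fin n → E) : Bool → Measure E
  | true => ∑ j : Fin n, Measure.dirac (X j)
  | false => (n : ℝ≥0) • P

/-- The multiple empirical integral `I_k^{(n)}(f)` for one realization `X` of the sample:
the integral of `f` over the off-diagonal set with respect to the `k`-fold product of the
signed measure `W_n = a^{-1/2} (Σ_j δ_{X_j} − n P)`, expanded multilinearly into its
positive and negative parts. -/
noncomputable def empInt {E : Type*} [MeasurableSpace E] (P : Measure E)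
    (n : ℕ) (a : ℝ) (X : Fin n → E) (k : ℕ) (f : (Fin k → E) → ℝ) : ℝ :=
  (Real.sqrt a)⁻¹ ^ k *
    ∑ ε : Fin k → Bool,
      (-1 : ℝ) ^ (Finset.univ.filter fun i => ε i = false).card *
        ∫ u in {u : Fin k → E | Function.Injective u}, f u
          ∂(Measure.pi fun i => mixMeasure P n X (ε i))

/-- The symmetrization `f̃` of a function of `k` variables. -/
noncomputable def symmetrize {E : Type*} (k : ℕ) (f : (Fin k → E) → ℝ) :
    (Fin k → E) → ℝ :=
  fun u => (k.factorial : ℝ)⁻¹ * ∑ σ : Equiv.Perm (Fin k), f (u ∘ σ)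


namespace TSM

open scoped Classical in
/-- The set of sample indices used by `j`. -/
noncomputable def rng {n k : ℕ} (j : Fin k → Option (Fin n)) : Finset (Fin n) :=
  Finset.univ.filter fun i => ∃ l, j l = some i

/-- No sample index is used twice. -/
def Valid {n k : ℕ} (j : Fin k → Option (Fin n)) : Prop :=
  ∀ l l' i, j l = some i → j l' = some i → l = l'

/-- Every slot carries a sample index. -/
def Full {n k : ℕ} (j : Fin k → Option (Fin n)) : Prop := ∀ l, j l ≠ none

/-- Extension relation. -/
def Ext {n k : ℕ} (j' j : Fin k → Option (Fin n)) : Prop :=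
  ∀ l, j' l ≠ none → j l = j' l

/-- Slots carrying a sample index. -/
def som {n k : ℕ} (j : Fin k → Option (Fin n)) : Finset (Fin k) :=
  Finset.univ.filter fun l => j l ≠ none

/-- Erase the slots in `A`. -/
def drp {n k : ℕ} (A : Finset (Fin k)) (j : Fin k → Option (Fin n)) :
    Fin k → Option (Fin n) := fun l => if l ∈ A then none else j l

/-- Weight of a slot. -/
def wt (n : ℕ) : Option (Fin n) → ℝ
  | none => -(n : ℝ)
  | some _ => 1

/-- Coefficients of the Hoeffding decomposition. -/
noncomputable def Dc (n : ℕ) : ℕ → ℕ → ℝ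
  | 0, _ => 1
  | q + 1, c => -(n : ℝ) * Dc n q c + ((n : ℝ) - c) * Dc n q (c + 1)

lemma mem_rng {n k : ℕ} {j : Fin k → Option (Fin n)} {i : Fin n} :
    i ∈ rng j ↔ ∃ l, j l = some i := by
  simp [rng]

lemma Dc_diff (n : ℕ) : ∀ q c, Dc n (q + 1) c - Dc n (q + 1) (c + 1) = (q + 1) * Dc n q (c + 1)
  | 0, c => by simp [Dc]
  | q + 1, c => by
    have h1 := Dc_diff n q c
    have h2 := Dc_diff n q (c + 1)
    have e1 : Dc n (q + 1 + 1) c = -(n : ℝ) * Dc n (q + 1) c + ((n : ℝ) - c) * Dc n (q + 1) (c + 1) := rfl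
    have e2 : Dc n (q + 1 + 1) (c + 1) = -(n : ℝ) * Dc n (q + 1) (c + 1)
      + ((n : ℝ) - (c + 1 : ℕ)) * Dc n (q + 1) (c + 1 + 1) := rfl
    have e3 : Dc n (q + 1) (c + 1) = -(n : ℝ) * Dc n q (c + 1)
      + ((n : ℝ) - (c + 1 : ℕ)) * Dc n q (c + 1 + 1) := rfl
    push_cast at *
    rw [e1, e2]
    linear_combination (-(n : ℝ)) * h1 + (n - (c + 1 : ℝ)) * h2 - (q + 1) * e3

lemma Dc_rec (n q c : ℕ) : Dc n (q + 2) c =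
    -(c : ℝ) * Dc n (q + 1) (c + 1) - n * (q + 1) * Dc n q (c + 1) := by
  have h1 := Dc_diff n q c
  have e1 : Dc n (q + 1 + 1) c = -(n : ℝ) * Dc n (q + 1) c + ((n : ℝ) - c) * Dc n (q + 1) (c + 1) := rfl
  show Dc n (q + 1 + 1) c = _
  rw [e1]
  linear_combination (-(n : ℝ)) * h1

lemma Dc_bound : ∀ q c : ℕ, ∃ C : ℝ, 0 ≤ C ∧ ∀ n : ℕ, 1 ≤ n → (Dc n q c) ^ 2 ≤ C * (n : ℝ) ^ q
  | 0, c => ⟨1, by norm_num, fun n _ => by simp [Dc]⟩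
  | 1, c => ⟨(c : ℝ) ^ 2, by positivity, fun n hn => by
      have : (1 : ℝ) ≤ n := by exact_mod_cast hn
      have e : Dc n 1 c = -(c : ℝ) := by simp [Dc]; ring
      rw [e]; nlinarith [sq_nonneg (c : ℝ)]⟩
  | q + 2, c => by
      obtain ⟨C1, h1, H1⟩ := Dc_bound (q + 1) (c + 1)
      obtain ⟨C2, h2, H2⟩ := Dc_bound q (c + 1)
      refine ⟨2 * (c : ℝ) ^ 2 * C1 + 2 * (q + 1) ^ 2 * C2, by positivity, fun n hn => ?_⟩
      have hn1 : (1 : ℝ) ≤ n := by exact_mod_cast hn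
      rw [Dc_rec]
      have a1 := H1 n hn
      have a2 := H2 n hn
      set x := Dc n (q + 1) (c + 1)
      set y := Dc n q (c + 1)
      calc (-(c : ℝ) * x - n * (q + 1) * y) ^ 2
          ≤ 2 * (c : ℝ) ^ 2 * x ^ 2 + 2 * (q + 1) ^ 2 * n ^ 2 * y ^ 2 := by
            nlinarith [sq_nonneg (-(c : ℝ) * x + n * (q + 1) * y)]
        _ ≤ 2 * (c : ℝ) ^ 2 * (C1 * n ^ (q + 1)) + 2 * (q + 1) ^ 2 * n ^ 2 * (C2 * n ^ q) := by
            gcongr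
        _ ≤ 2 * (c : ℝ) ^ 2 * (C1 * n ^ (q + 2)) + 2 * (q + 1) ^ 2 * n ^ 2 * (C2 * n ^ q) := by
            gcongr <;> first | assumption | omega
        _ = _ := by ring

lemma Dc_bound_unif (k : ℕ) : ∃ C : ℝ, 0 ≤ C ∧ ∀ n : ℕ, 1 ≤ n → ∀ q c, q ≤ k → c ≤ k →
    (Dc n q c) ^ 2 ≤ C * (n : ℝ) ^ q := by
  choose C hC hb using Dc_bound
  refine ⟨∑ q ∈ Finset.range (k + 1), ∑ c ∈ Finset.range (k + 1), C q c,
    Finset.sum_nonneg fun _ _ => Finset.sum_nonneg fun _ _ => hC _ _, fun n hn q c hq hc => ?_⟩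
  refine (hb q c n hn).trans ?_
  gcongr
  refine le_trans ?_ (Finset.single_le_sum (f := fun q => ∑ c ∈ Finset.range (k + 1), C q c)
    (fun _ _ => Finset.sum_nonneg fun _ _ => hC _ _) (Finset.mem_range.2 (Nat.lt_succ_of_le hq)))
  exact Finset.single_le_sum (f := fun c => C q c)
    (fun _ _ => hC _ _) (Finset.mem_range.2 (Nat.lt_succ_of_le hc))

open scoped Classical in
lemma ext_sum {n k : ℕ} (Z : Finset (Fin k)) : ∀ (j' : Fin k → Option (Fin n)), Valid j' →
    (∀ l ∈ Z, j' l = none) →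
    ∑ j : Fin k → Option (Fin n) with (Valid j ∧ Ext j' j ∧ ∀ l ∉ Z, j l = j' l),
      ∏ l ∈ Z, wt n (j l) = Dc n Z.card (rng j').card := by
  induction Z using Finset.induction_on with
  | empty =>
    intro j' hv hz
    have : (Finset.univ.filter fun j : Fin k → Option (Fin n) =>
        (Valid j ∧ Ext j' j ∧ ∀ l ∉ (∅ : Finset (Fin k)), j l = j' l)) = {j'} := by
      ext j
      simp only [Finset.mem_filter, Finset.mem_univ, true_and, Finset.mem_singleton]
      constructor
      · rintro ⟨_, _, h⟩; funext l; exact h l (by simp)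
      · rintro rfl; exact ⟨hv, fun _ _ => rfl, fun _ _ => rfl⟩
    rw [this]; simp [Dc]
  | insert l0 Z hl0 ih =>
    intro j' hv hz
    have hj0 : j' l0 = none := hz l0 (by simp)
    rw [Finset.card_insert_of_notMem hl0]
    show _ = -(n : ℝ) * Dc n Z.card (rng j').card +
      ((n : ℝ) - ((rng j').card : ℕ)) * Dc n Z.card ((rng j').card + 1)
    rw [← Finset.sum_fiberwise (g := fun j : Fin k → Option (Fin n) => j l0), Fintype.sum_option]
    congr 1
    · rw [← ih j' hv (fun l hl => hz l (by simp [hl])), Finset.mul_sum, Finset.filter_filter]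
      have : (Finset.univ.filter fun j : Fin k → Option (Fin n) =>
          ((Valid j ∧ Ext j' j ∧ ∀ l ∉ insert l0 Z, j l = j' l) ∧ j l0 = none)) =
          Finset.univ.filter fun j => (Valid j ∧ Ext j' j ∧ ∀ l ∉ Z, j l = j' l) := by
        ext j
        simp only [Finset.mem_filter, Finset.mem_univ, true_and]
        constructor
        · rintro ⟨⟨h1, h2, h3⟩, h4⟩
          refine ⟨h1, h2, fun l hl => ?_⟩
          by_cases h : l = l0
          · subst h; rw [h4, hj0]
          · exact h3 l (by simp [h, hl])
        · rintro ⟨h1, h2, h3⟩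
          refine ⟨⟨h1, h2, fun l hl => h3 l ?_⟩, by rw [h3 l0 hl0, hj0]⟩
          simp at hl; exact hl.2
      rw [this]
      refine Finset.sum_congr rfl fun j hj => ?_
      simp only [Finset.mem_filter, Finset.mem_univ, true_and] at hj
      rw [Finset.prod_insert hl0, hj.2.2 l0 hl0, hj0]; rfl
    · have key : ∀ i : Fin n, (∑ j ∈ (Finset.univ.filter fun j : Fin k → Option (Fin n) =>
          (Valid j ∧ Ext j' j ∧ ∀ l ∉ insert l0 Z, j l = j' l)) with j l0 = some i,
          ∏ l ∈ insert l0 Z, wt n (j l)) =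
          if i ∈ rng j' then 0 else Dc n Z.card ((rng j').card + 1) := by
        intro i
        rw [Finset.filter_filter]
        split_ifs with hi
        · rw [Finset.filter_false_of_mem, Finset.sum_empty]
          rintro j - ⟨⟨h1, h2, h3⟩, h4⟩
          obtain ⟨l, hl⟩ := mem_rng.1 hi
          have := h2 l (by simp [hl])
          have e := h1 l l0 i (by rw [this, hl]) h4
          rw [e, hj0] at hl; cases hl
        · have hv' : Valid (Function.update j' l0 (some i)) := by
            intro l l' i' hl hl'
            by_cases h : l = l0 <;> by_cases h' : l' = l0
            · rw [h, h']
            · subst h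
              rw [Function.update_self] at hl
              rw [Function.update_of_ne h'] at hl'
              cases hl
              exact absurd (mem_rng.2 ⟨l', hl'⟩) hi
            · subst h'
              rw [Function.update_self] at hl'
              rw [Function.update_of_ne h] at hl
              cases hl'
              exact absurd (mem_rng.2 ⟨l, hl⟩) hi
            · rw [Function.update_of_ne h] at hl
              rw [Function.update_of_ne h'] at hl'
              exact hv l l' i' hl hl'
          have hr : rng (Function.update j' l0 (some i)) = insert i (rng j') := by
            ext i'
            simp only [mem_rng, Finset.mem_insert]
            constructor
            · rintro ⟨l, hl⟩
              by_cases h : l = l0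
              · subst h; rw [Function.update_self] at hl; left; cases hl; rfl
              · rw [Function.update_of_ne h] at hl; right; exact ⟨l, hl⟩
            · rintro (rfl | ⟨l, hl⟩)
              · exact ⟨l0, Function.update_self ..⟩
              · refine ⟨l, ?_⟩
                rw [Function.update_of_ne, hl]
                rintro rfl; rw [hj0] at hl; cases hl
          have hc : (rng j').card + 1 = (rng (Function.update j' l0 (some i))).card := by
            rw [hr, Finset.card_insert_of_notMem hi]
          rw [hc, ← ih _ hv' (fun l hl => by
            rw [Function.update_of_ne (by rintro rfl; exact hl0 hl)]; exact hz l (by simp [hl]))]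
          have : (Finset.univ.filter fun j : Fin k → Option (Fin n) =>
              ((Valid j ∧ Ext j' j ∧ ∀ l ∉ insert l0 Z, j l = j' l) ∧ j l0 = some i)) =
              Finset.univ.filter fun j => (Valid j ∧ Ext (Function.update j' l0 (some i)) j ∧
                ∀ l ∉ Z, j l = Function.update j' l0 (some i) l) := by
            ext j
            simp only [Finset.mem_filter, Finset.mem_univ, true_and]
            constructor
            · rintro ⟨⟨h1, h2, h3⟩, h4⟩
              refine ⟨h1, fun l hl => ?_, fun l hl => ?_⟩
              · by_cases h : l = l0
                · subst h; rw [h4, Function.update_self]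
                · rw [Function.update_of_ne h] at hl ⊢; exact h2 l hl
              · by_cases h : l = l0
                · subst h; rw [h4, Function.update_self]
                · rw [Function.update_of_ne h]; exact h3 l (by simp [h, hl])
            · rintro ⟨h1, h2, h3⟩
              refine ⟨⟨h1, fun l hl => ?_, fun l hl => ?_⟩, ?_⟩
              · have h : l ≠ l0 := by rintro rfl; exact hl hj0
                have := h2 l (by rwa [Function.update_of_ne h])
                rwa [Function.update_of_ne h] at this
              · simp only [Finset.mem_insert, not_or] at hl
                have := h3 l hl.2
                rwa [Function.update_of_ne hl.1] at this
              · have := h3 l0 hl0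
                rwa [Function.update_self] at this
          rw [this]
          refine Finset.sum_congr rfl fun j hj => ?_
          simp only [Finset.mem_filter, Finset.mem_univ, true_and] at hj
          rw [Finset.prod_insert hl0, hj.2.2 l0 hl0, Function.update_self]
          simp [wt]
      rw [Finset.sum_congr rfl fun i _ => key i, Finset.sum_ite, Finset.sum_const_zero, zero_add,
        Finset.sum_const, nsmul_eq_mul]
      congr 1
      have : (Finset.univ.filter fun i => i ∉ rng j') = (rng j')ᶜ := by ext; simp
      rw [this, Finset.card_compl, Nat.cast_sub (Finset.card_le_univ _)]
      simp

open scoped Classical in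
lemma ext_sum' {n k : ℕ} (j' : Fin k → Option (Fin n)) (hv : Valid j') :
    ∑ j : Fin k → Option (Fin n) with (Valid j ∧ Ext j' j), ∏ l, wt n (j l) =
      Dc n (som j')ᶜ.card (rng j').card := by
  rw [← ext_sum (som j')ᶜ j' hv (by simp [som])]
  have : (Finset.univ.filter fun j : Fin k → Option (Fin n) =>
      (Valid j ∧ Ext j' j ∧ ∀ l ∉ (som j')ᶜ, j l = j' l)) =
      Finset.univ.filter fun j => (Valid j ∧ Ext j' j) := by
    ext j
    simp only [Finset.mem_filter, Finset.mem_univ, true_and]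
    constructor
    · rintro ⟨h1, h2, _⟩; exact ⟨h1, h2⟩
    · rintro ⟨h1, h2⟩; exact ⟨h1, h2, fun l hl => h2 l (by simpa [som] using hl)⟩
  rw [this]
  refine Finset.sum_congr rfl fun j hj => ?_
  simp only [Finset.mem_filter, Finset.mem_univ, true_and] at hj
  rw [← Finset.prod_mul_prod_compl (som j')ᶜ, compl_compl]
  conv_rhs => rw [← mul_one (∏ l ∈ (som j')ᶜ, wt n (j l))]
  congr 1
  refine Finset.prod_eq_one fun l hl => ?_
  have hl' : j' l ≠ none := by simpa [som] using hl
  rw [hj.2 l hl']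
  obtain ⟨i, hi⟩ := Option.ne_none_iff_exists'.1 hl'
  rw [hi]; rfl

lemma drp_valid {n k : ℕ} {j : Fin k → Option (Fin n)} (hv : Valid j) (A : Finset (Fin k)) :
    Valid (drp A j) := by
  intro l l' i hl hl'
  unfold drp at hl hl'
  split_ifs at hl hl'
  exact hv l l' i hl hl'

lemma rng_drp_subset {n k : ℕ} (j : Fin k → Option (Fin n)) (A : Finset (Fin k)) :
    rng (drp A j) ⊆ rng j := by
  intro i hi
  obtain ⟨l, hl⟩ := mem_rng.1 hi
  unfold drp at hl
  split_ifs at hl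
  exact mem_rng.2 ⟨l, hl⟩

open scoped Classical in
lemma sum_drp {n k : ℕ} (j : Fin k → Option (Fin n)) (F : (Fin k → Option (Fin n)) → ℝ) :
    ∑ A ∈ (som j).powerset, F (drp A j) = ∑ j' : Fin k → Option (Fin n) with Ext j' j, F j' := by
  refine Finset.sum_nbij' (fun A => drp A j) (fun j' => (som j).filter fun l => j' l = none)
    ?_ ?_ ?_ ?_ ?_
  · intro A _
    simp only [Finset.mem_filter, Finset.mem_univ, true_and]
    intro l hl
    unfold drp at hl ⊢
    split_ifs at hl ⊢ <;> simp_all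
  · intro j' _
    exact Finset.mem_powerset.2 (Finset.filter_subset _ _)
  · intro A hA
    ext l
    have hA' := Finset.mem_powerset.1 hA
    rw [Finset.mem_filter]; unfold drp
    constructor
    · rintro ⟨h1, h2⟩
      by_contra h
      rw [if_neg h] at h2
      simp [som, h2] at h1
    · intro h; exact ⟨hA' h, if_pos h⟩
  · intro j' hj'
    simp only [Finset.mem_filter, Finset.mem_univ, true_and] at hj'
    funext l
    simp only [drp, Finset.mem_filter]
    split_ifs with h
    · exact h.2.symm
    · by_cases h' : j' l = none
      · rw [h']
        by_contra h2
        exact h ⟨by simp [som, h2], h'⟩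
      · exact hj' l h'
  · intro A _; rfl

lemma moebius {α : Type*} [DecidableEq α] (S : Finset α) : ∀ F : Finset α → ℝ,
    ∑ A ∈ S.powerset, ∑ B ∈ (S \ A).powerset, (-1 : ℝ) ^ B.card * F (A ∪ B) = F ∅ := by
  induction S using Finset.induction_on with
  | empty => intro F; simp
  | insert l S hl ih =>
    intro F
    rw [Finset.sum_powerset_insert hl]
    have h1 : ∀ A ∈ S.powerset, ∑ B ∈ (insert l S \ A).powerset, (-1 : ℝ) ^ B.card * F (A ∪ B) =
        ∑ B ∈ (S \ A).powerset, (-1 : ℝ) ^ B.card * F (A ∪ B) -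
        ∑ B ∈ (S \ A).powerset, (-1 : ℝ) ^ B.card * F (insert l (A ∪ B)) := by
      intro A hA
      have hlA : l ∉ A := fun h => hl (Finset.mem_powerset.1 hA h)
      rw [Finset.insert_sdiff_of_notMem _ hlA,
        Finset.sum_powerset_insert (by simp [hl]), sub_eq_add_neg, ← Finset.sum_neg_distrib]
      congr 1
      refine Finset.sum_congr rfl fun B hB => ?_
      have hlB : l ∉ B := fun h => hl (Finset.mem_sdiff.1 (Finset.mem_powerset.1 hB h)).1
      rw [Finset.card_insert_of_notMem hlB, Finset.union_insert]; ring
    have h2 : ∀ A ∈ S.powerset, ∑ B ∈ (insert l S \ insert l A).powerset,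
        (-1 : ℝ) ^ B.card * F (insert l A ∪ B) =
        ∑ B ∈ (S \ A).powerset, (-1 : ℝ) ^ B.card * F (insert l (A ∪ B)) := by
      intro A hA
      have : insert l S \ insert l A = S \ A := by
        ext x
        simp only [Finset.mem_sdiff, Finset.mem_insert, not_or]
        constructor
        · rintro ⟨h1 | h1, h2, h3⟩
          · exact absurd h1 h2
          · exact ⟨h1, h3⟩
        · rintro ⟨g1, h2⟩
          exact ⟨Or.inr g1, by rintro rfl; exact hl g1, h2⟩
      rw [this]
      refine Finset.sum_congr rfl fun B hB => ?_
      rw [Finset.insert_union]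
    rw [Finset.sum_congr rfl h1, Finset.sum_congr rfl h2, ← Finset.sum_add_distrib]
    simp only [sub_add_cancel]
    exact ih F

/-- Alternating sum of `F` over restrictions of `j`. -/
noncomputable def alt {n k : ℕ} (F : (Fin k → Option (Fin n)) → ℝ)
    (j : Fin k → Option (Fin n)) : ℝ :=
  ∑ A ∈ (som j).powerset, (-1 : ℝ) ^ A.card * F (drp A j)

lemma alt_inv {n k : ℕ} (F : (Fin k → Option (Fin n)) → ℝ) (j : Fin k → Option (Fin n)) :
    F j = ∑ A ∈ (som j).powerset, alt F (drp A j) := by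
  have := moebius (som j) (fun A => F (drp A j))
  have e : drp ∅ j = j := by funext l; simp [drp]
  simp only [e] at this
  rw [← this]
  refine Finset.sum_congr rfl fun A hA => ?_
  unfold alt
  have hs : som (drp A j) = som j \ A := by
    ext l; rw [Finset.mem_sdiff, som, som, Finset.mem_filter, Finset.mem_filter]; unfold drp
    split_ifs with h <;> simp [h]
  rw [hs]
  refine Finset.sum_congr rfl fun B hB => ?_
  congr 2
  funext l
  simp only [drp, Finset.mem_union]
  split_ifs <;> simp_all

lemma ext_valid {n k : ℕ} {j j' : Fin k → Option (Fin n)} (hv : Valid j) (he : Ext j' j) :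
    Valid j' := by
  intro l l' i hl hl'
  refine hv l l' i ?_ ?_
  · rw [he l (by simp [hl]), hl]
  · rw [he l' (by simp [hl']), hl']

open scoped Classical in
lemma hoeffding {n k : ℕ} (F : (Fin k → Option (Fin n)) → ℝ) :
    ∑ j : Fin k → Option (Fin n) with Valid j, (∏ l, wt n (j l)) * F j =
    ∑ j : Fin k → Option (Fin n) with Valid j,
      Dc n (som j)ᶜ.card (rng j).card * alt F j := by
  have h1 : ∀ j : Fin k → Option (Fin n), (∏ l, wt n (j l)) * F j =
      ∑ j' : Fin k → Option (Fin n) with Ext j' j, (∏ l, wt n (j l)) * alt F j' := by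
    intro j
    rw [← Finset.mul_sum, ← sum_drp, ← alt_inv]
  rw [Finset.sum_congr rfl fun j _ => h1 j]
  rw [Finset.sum_comm' (s := Finset.univ.filter fun j : Fin k → Option (Fin n) => Valid j)
    (t' := Finset.univ.filter fun j : Fin k → Option (Fin n) => Valid j)
    (s' := fun j' => Finset.univ.filter fun j => (Valid j ∧ Ext j' j))]
  · refine Finset.sum_congr rfl fun j' hj' => ?_
    simp only [Finset.mem_filter, Finset.mem_univ, true_and] at hj'
    rw [← ext_sum' j' hj', Finset.sum_mul]
  · intro j j'
    simp only [Finset.mem_filter, Finset.mem_univ, true_and]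
    exact ⟨fun ⟨h1, h2⟩ => ⟨⟨h1, h2⟩, ext_valid h1 h2⟩, fun ⟨⟨h1, h2⟩, _⟩ => ⟨h1, h2⟩⟩

end TSM

namespace TSM

/-- Product measure. -/
noncomputable abbrev pp {E : Type*} [MeasurableSpace E] (P : Measure E) (m : ℕ) :
    Measure (Fin m → E) := Measure.pi fun _ : Fin m => P

/-- Slots with a sample index are filled by `x`, the others by `y`. -/
def mix {E : Type*} {n k : ℕ} (j : Fin k → Option (Fin n)) (x : Fin n → E) (y : Fin k → E) :
    Fin k → E := fun l => (j l).elim (y l) x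

/-- Partial integral of `f`. -/
noncomputable def Phi {E : Type*} [MeasurableSpace E] (P : Measure E) {n k : ℕ}
    (f : (Fin k → E) → ℝ) (j : Fin k → Option (Fin n)) (x : Fin n → E) : ℝ :=
  ∫ y, f (mix j x y) ∂(pp P k)

/-- Degenerate part. -/
noncomputable def Psi {E : Type*} [MeasurableSpace E] (P : Measure E) {n k : ℕ}
    (f : (Fin k → E) → ℝ) (j : Fin k → Option (Fin n)) (x : Fin n → E) : ℝ :=
  alt (fun j' => Phi P f j' x) j

/-- `g` does not depend on coordinate `i`. -/
def NotDep {E : Type*} {n : ℕ} (g : (Fin n → E) → ℝ) (i : Fin n) : Prop :=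
  ∀ x t, g (Function.update x i t) = g x

lemma imul {α : Type*} [MeasurableSpace α] {ν : Measure α} {F G : α → ℝ}
    (hF : MemLp F 2 ν) (hG : MemLp G 2 ν) : Integrable (fun x => F x * G x) ν :=
  hF.integrable_mul hG

lemma integral_mp {α β : Type*} [MeasurableSpace α] [MeasurableSpace β] {ν : Measure α}
    {ρ : Measure β} {T : α → β} (hT : MeasurePreserving T ν ρ) {F : β → ℝ}
    (hF : AEStronglyMeasurable F ρ) : ∫ y, F y ∂ρ = ∫ x, F (T x) ∂ν := by
  rw [← hT.map_eq, integral_map hT.measurable.aemeasurable (by rwa [hT.map_eq])]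

lemma comp_mp {E : Type*} [MeasurableSpace E] (P : Measure E) [IsProbabilityMeasure P]
    {ι κ : Type*} [Fintype ι] [Fintype κ] (φ : κ → ι) (hφ : Function.Injective φ) :
    MeasurePreserving (fun z : ι → E => fun l => z (φ l)) (Measure.pi fun _ : ι => P)
      (Measure.pi fun _ : κ => P) := by
  refine ⟨by fun_prop, ?_⟩
  have h1 : iIndepFun (fun (i : ι) (z : ι → E) => z i) (Measure.pi fun _ : ι => P) :=
    iIndepFun_pi (X := fun _ => id) (fun _ => aemeasurable_id)
  have h2 := h1.precomp hφ
  rw [iIndepFun_iff_map_fun_eq_pi_map (fun l => (measurable_pi_apply _).aemeasurable)] at h2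
  refine h2.trans ?_
  congr 1
  funext l
  exact (measurePreserving_eval (fun _ : ι => P) (φ l)).map_eq

/-- Selection map. -/
def emb {n k : ℕ} (j : Fin k → Option (Fin n)) (l : Fin k) : Fin n ⊕ Fin k :=
  (j l).elim (Sum.inr l) Sum.inl

lemma emb_inj {n k : ℕ} {j : Fin k → Option (Fin n)} (hv : Valid j) :
    Function.Injective (emb j) := by
  intro l l' h
  unfold emb at h
  cases e : j l <;> cases e' : j l' <;> simp [e, e'] at h
  · exact h
  · subst h; exact hv l l' _ e e'

/-- Glue. -/
def glue {E : Type*} {n k : ℕ} (p : (Fin n → E) × (Fin k → E)) : Fin n ⊕ Fin k → E :=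
  Sum.elim p.1 p.2

lemma glue_mp {E : Type*} [MeasurableSpace E] (P : Measure E) [IsProbabilityMeasure P] (n k : ℕ) :
    MeasurePreserving (glue : (Fin n → E) × (Fin k → E) → _) ((pp P n).prod (pp P k))
      (Measure.pi fun _ : Fin n ⊕ Fin k => P) := by
  have := measurePreserving_sumPiEquivProdPi_symm (X := fun _ : Fin n ⊕ Fin k => E)
    (fun _ : Fin n ⊕ Fin k => P)
  convert this using 1
  funext p
  funext s
  cases s <;> rfl

lemma mix_eq {E : Type*} {n k : ℕ} (j : Fin k → Option (Fin n)) (p : (Fin n → E) × (Fin k → E)) :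
    mix j p.1 p.2 = fun l => glue p (emb j l) := by
  funext l
  unfold mix emb glue
  cases j l <;> rfl

lemma mix_mp {E : Type*} [MeasurableSpace E] (P : Measure E) [IsProbabilityMeasure P] {n k : ℕ}
    {j : Fin k → Option (Fin n)} (hv : Valid j) :
    MeasurePreserving (fun p : (Fin n → E) × (Fin k → E) => mix j p.1 p.2)
      ((pp P n).prod (pp P k)) (pp P k) := by
  have := (comp_mp P (emb j) (emb_inj hv)).comp (glue_mp P n k)
  convert this using 1
  funext p
  exact mix_eq j p

lemma mix_memLp {E : Type*} [MeasurableSpace E] (P : Measure E) [IsProbabilityMeasure P] {n k : ℕ}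
    {j : Fin k → Option (Fin n)} (hv : Valid j) {f : (Fin k → E) → ℝ} (hf : MemLp f 2 (pp P k)) :
    MemLp (fun p : (Fin n → E) × (Fin k → E) => f (mix j p.1 p.2)) 2 ((pp P n).prod (pp P k)) :=
  hf.comp_measurePreserving (mix_mp P hv)

lemma cs {α : Type*} [MeasurableSpace α] (ν : Measure α) [IsFiniteMeasure ν] (S : Set α)
    (F : α → ℝ) (hF : MemLp F 2 ν) :
    (∫ x in S, F x ∂ν) ^ 2 ≤ ν.real S * ∫ x in S, F x ^ 2 ∂ν := by
  have hF' : MemLp F 2 (ν.restrict S) := hF.restrict S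
  have i1 : Integrable F (ν.restrict S) := hF'.integrable (by norm_num)
  have i2 : Integrable (fun x => F x ^ 2) (ν.restrict S) := hF'.integrable_sq
  have key : ∀ t : ℝ, 0 ≤ ν.real S * (t * t) + (-2 * ∫ x in S, F x ∂ν) * t +
      ∫ x in S, F x ^ 2 ∂ν := by
    intro t
    have h0 : 0 ≤ ∫ x in S, (F x - t) ^ 2 ∂ν := integral_nonneg fun x => sq_nonneg _
    have e : ∫ x in S, (F x - t) ^ 2 ∂ν = ∫ x in S, (F x ^ 2 + (-2 * t) * F x + t ^ 2) ∂ν := by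
      congr 1; funext x; ring
    have i3 : Integrable (fun x => F x ^ 2 + (-2 * t) * F x) (ν.restrict S) :=
      i2.add (i1.const_mul _)
    rw [e, integral_add i3 (integrable_const _),
      integral_add i2 (i1.const_mul _), integral_const_mul, setIntegral_const, smul_eq_mul] at h0
    linarith
  have := discrim_le_zero key
  unfold discrim at this
  nlinarith

lemma jensen {α : Type*} [MeasurableSpace α] (ν : Measure α) [IsProbabilityMeasure ν]
    (F : α → ℝ) (hF : MemLp F 2 ν) : (∫ x, F x ∂ν) ^ 2 ≤ ∫ x, F x ^ 2 ∂ν := by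
  have := cs ν Set.univ F hF
  simpa using this

lemma ae_memLp {α β : Type*} [MeasurableSpace α] [MeasurableSpace β] (ν : Measure α)
    (ρ : Measure β) [SFinite ν] [SFinite ρ] {F : α × β → ℝ} (hF : MemLp F 2 (ν.prod ρ)) :
    ∀ᵐ x ∂ν, MemLp (fun y => F (x, y)) 2 ρ := by
  filter_upwards [hF.1.prodMk_left, hF.integrable_sq.prod_right_ae] with x h1 h2
  exact (memLp_two_iff_integrable_sq h1).2 h2

lemma Phi_aesm {E : Type*} [MeasurableSpace E] (P : Measure E) [IsProbabilityMeasure P] {n k : ℕ}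
    {j : Fin k → Option (Fin n)} (hv : Valid j) {f : (Fin k → E) → ℝ} (hf : MemLp f 2 (pp P k)) :
    AEStronglyMeasurable (Phi P f j) (pp P n) :=
  (mix_memLp P hv hf).1.integral_prod_right'

lemma Phi_memLp {E : Type*} [MeasurableSpace E] (P : Measure E) [IsProbabilityMeasure P] {n k : ℕ}
    {j : Fin k → Option (Fin n)} (hv : Valid j) {f : (Fin k → E) → ℝ} (hf : MemLp f 2 (pp P k)) :
    MemLp (Phi P f j) 2 (pp P n) := by
  have hm := mix_memLp P hv hf
  rw [memLp_two_iff_integrable_sq (Phi_aesm P hv hf)]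
  refine (hm.integrable_sq.integral_prod_left).mono' ((Phi_aesm P hv hf).pow 2) ?_
  filter_upwards [ae_memLp _ _ hm] with x hx
  rw [Real.norm_of_nonneg (sq_nonneg _)]
  exact jensen _ _ hx

lemma Psi_memLp {E : Type*} [MeasurableSpace E] (P : Measure E) [IsProbabilityMeasure P] {n k : ℕ}
    {j : Fin k → Option (Fin n)} (hv : Valid j) {f : (Fin k → E) → ℝ} (hf : MemLp f 2 (pp P k)) :
    MemLp (Psi P f j) 2 (pp P n) := by
  unfold Psi alt
  exact memLp_finsetSum _ fun A _ => (Phi_memLp P (drp_valid hv A) hf).const_mul _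

lemma Phi_sq_bound {E : Type*} [MeasurableSpace E] (P : Measure E) [IsProbabilityMeasure P]
    {n k : ℕ} {j : Fin k → Option (Fin n)} (hv : Valid j) {f : (Fin k → E) → ℝ}
    (hf : MemLp f 2 (pp P k)) {l : Fin k} (hl : j l = none) {B : Set E} (hB : MeasurableSet B) :
    ∫ x, Phi P f j x ^ 2 ∂(pp P n) ≤ 2 * P.real B * ∫ u, f u ^ 2 ∂(pp P k) +
      2 * ∫ u in {u : Fin k → E | u l ∈ B}ᶜ, f u ^ 2 ∂(pp P k) := by
  have hm := mix_memLp P (n := n) hv hf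
  set S : Set (Fin k → E) := {u | u l ∈ B} with hS
  have hSm : MeasurableSet S := measurable_pi_apply l hB
  have hi := hm.integrable_sq
  have hPS : (pp P k).real S = P.real B := by
    have := (measurePreserving_eval (fun _ : Fin k => P) l).measure_preimage hB.nullMeasurableSet
    unfold Measure.real
    rw [← this]; rfl
  have hfi : Integrable (fun u => Sᶜ.indicator (fun u => f u ^ 2) u) (pp P k) :=
    hf.integrable_sq.indicator hSm.compl
  have hi2 : Integrable (fun p : (Fin n → E) × (Fin k → E) =>
      Sᶜ.indicator (fun u => f u ^ 2) (mix j p.1 p.2)) ((pp P n).prod (pp P k)) :=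
    (mix_mp P hv).integrable_comp_of_integrable hfi
  have hmixS : ∀ (x : Fin n → E) y, mix j x y ∈ S ↔ y ∈ S := by
    intro x y; simp [S, mix, hl]
  have e1 : ∫ x, ∫ y, f (mix j x y) ^ 2 ∂(pp P k) ∂(pp P n) = ∫ u, f u ^ 2 ∂(pp P k) := by
    rw [integral_mp (mix_mp P (n := n) hv) hf.integrable_sq.1, integral_prod _ hi]
  have e2 : ∫ x, ∫ y, Sᶜ.indicator (fun u => f u ^ 2) (mix j x y) ∂(pp P k) ∂(pp P n) =
      ∫ u in Sᶜ, f u ^ 2 ∂(pp P k) := by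
    rw [← integral_indicator hSm.compl]
    rw [integral_mp (mix_mp P (n := n) hv) hfi.1, integral_prod _ hi2]
  rw [← e1, ← e2, ← integral_const_mul, ← integral_const_mul, ← integral_add
    (hi.integral_prod_left.const_mul _) (hi2.integral_prod_left.const_mul _)]
  refine integral_mono_ae (Phi_memLp P hv hf).integrable_sq
    ((hi.integral_prod_left.const_mul _).add (hi2.integral_prod_left.const_mul _)) ?_
  filter_upwards [ae_memLp _ _ hm] with x hx
  have hx1 : Integrable (fun y => f (mix j x y)) (pp P k) := hx.integrable (by norm_num)
  have hx2 : Integrable (fun y => f (mix j x y) ^ 2) (pp P k) := hx.integrable_sq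
  have d1 := cs (pp P k) S _ hx
  have d2 := cs (pp P k) Sᶜ _ hx
  have e3 : ∫ y, Sᶜ.indicator (fun u => f u ^ 2) (mix j x y) ∂(pp P k) =
      ∫ y in Sᶜ, f (mix j x y) ^ 2 ∂(pp P k) := by
    rw [← integral_indicator hSm.compl]
    congr 1; funext y
    by_cases h : y ∈ S
    · rw [Set.indicator_of_notMem (by simp [hmixS, h]), Set.indicator_of_notMem (by simp [h])]
    · rw [Set.indicator_of_mem (by simp [hmixS, h]), Set.indicator_of_mem (by simp [h])]
  rw [e3]
  have d3 : Phi P f j x = ∫ y in S, f (mix j x y) ∂(pp P k) + ∫ y in Sᶜ, f (mix j x y) ∂(pp P k) :=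
    (integral_add_compl hSm hx1).symm
  have d4 : ∫ y in S, f (mix j x y) ^ 2 ∂(pp P k) ≤ ∫ y, f (mix j x y) ^ 2 ∂(pp P k) :=
    setIntegral_le_integral hx2 (Eventually.of_forall fun y => sq_nonneg _)
  have d5 : (pp P k).real Sᶜ ≤ 1 := measureReal_le_one
  have d6 : 0 ≤ ∫ y in Sᶜ, f (mix j x y) ^ 2 ∂(pp P k) := integral_nonneg fun y => sq_nonneg _
  rw [hPS] at d1
  have d7 : P.real B * ∫ y in S, f (mix j x y) ^ 2 ∂(pp P k) ≤
    P.real B * ∫ y, f (mix j x y) ^ 2 ∂(pp P k) := by gcongr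
  have d8 := mul_le_mul_of_nonneg_right d5 d6
  rw [d3]
  nlinarith [sq_nonneg (∫ y in S, f (mix j x y) ∂(pp P k) - ∫ y in Sᶜ, f (mix j x y) ∂(pp P k))]

lemma Phi_mul {E : Type*} [MeasurableSpace E] (P : Measure E) [IsProbabilityMeasure P]
    {n k : ℕ} {j : Fin k → Option (Fin n)} (hv : Valid j) {f : (Fin k → E) → ℝ}
    (hf : MemLp f 2 (pp P k)) {g : (Fin n → E) → ℝ} (hg : MemLp g 2 (pp P n)) :
    ∫ x, Phi P f j x * g x ∂(pp P n) = ∫ z, f (fun l => z (emb j l)) * g (fun i => z (Sum.inl i))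
      ∂(Measure.pi fun _ : Fin n ⊕ Fin k => P) := by
  have h1 : MemLp (fun z : Fin n ⊕ Fin k → E => f (fun l => z (emb j l))) 2
      (Measure.pi fun _ : Fin n ⊕ Fin k => P) :=
    hf.comp_measurePreserving (comp_mp P (emb j) (emb_inj hv))
  have h2 : MemLp (fun z : Fin n ⊕ Fin k → E => g (fun i => z (Sum.inl i))) 2
      (Measure.pi fun _ : Fin n ⊕ Fin k => P) :=
    hg.comp_measurePreserving (comp_mp P Sum.inl Sum.inl_injective)
  have h3 := imul h1 h2
  have h4 := (glue_mp P n k).integrable_comp_of_integrable h3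
  rw [integral_mp (glue_mp P n k) h3.1]
  refine Eq.trans ?_ (integral_prod _ h4).symm
  congr 1; funext x
  unfold Phi
  rw [← integral_mul_const]
  congr 1; funext y
  rw [mix_eq j (x, y)]
  rfl

lemma Phi_swap {E : Type*} [MeasurableSpace E] (P : Measure E) [IsProbabilityMeasure P]
    {n k : ℕ} {j j2 : Fin k → Option (Fin n)} (hv : Valid j) {f : (Fin k → E) → ℝ}
    (hf : MemLp f 2 (pp P k)) {g : (Fin n → E) → ℝ} (hg : MemLp g 2 (pp P n))
    {i : Fin n} (hgi : NotDep g i) {l : Fin k} (hl : j l = some i)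
    (hj2 : j2 = Function.update j l none) :
    ∫ x, Phi P f j x * g x ∂(pp P n) = ∫ x, Phi P f j2 x * g x ∂(pp P n) := by
  have hv2 : Valid j2 := by
    refine ext_valid hv fun l' hl' => ?_
    by_cases h : l' = l
    · subst h; simp [hj2] at hl'
    · rw [hj2, Function.update_of_ne h]
  rw [Phi_mul P hv hf hg, Phi_mul P hv2 hf hg]
  have hs := comp_mp P (Equiv.swap (Sum.inl i : Fin n ⊕ Fin k) (Sum.inr l)) (Equiv.injective _)
  have h1 : MemLp (fun z : Fin n ⊕ Fin k → E => f (fun l => z (emb j l))) 2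
      (Measure.pi fun _ : Fin n ⊕ Fin k => P) :=
    hf.comp_measurePreserving (comp_mp P (emb j) (emb_inj hv))
  have h2 : MemLp (fun z : Fin n ⊕ Fin k → E => g (fun i => z (Sum.inl i))) 2
      (Measure.pi fun _ : Fin n ⊕ Fin k => P) :=
    hg.comp_measurePreserving (comp_mp P Sum.inl Sum.inl_injective)
  have h3 := imul h1 h2
  rw [integral_mp hs h3.1]
  congr 1; funext z
  congr 1
  · congr 1; funext l'
    by_cases h : l' = l
    · subst h; simp [emb, hl, hj2]
    · unfold emb
      rw [hj2, Function.update_of_ne h]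
      cases e : j l' with
      | none => 
        simp only [Option.elim]
        rw [Equiv.swap_apply_of_ne_of_ne (by simp) (by simpa using h)]
      | some i' =>
        simp only [Option.elim]
        rw [Equiv.swap_apply_of_ne_of_ne _ (by simp)]
        intro h'
        simp at h'
        subst h'
        exact h (hv _ _ _ e hl)
  · have : (fun i' => z ((Equiv.swap (Sum.inl i : Fin n ⊕ Fin k) (Sum.inr l)) (Sum.inl i'))) =
        Function.update (fun i' => z (Sum.inl i')) i (z (Sum.inr l)) := by
      funext i'
      by_cases h : i' = i
      · subst h; simp
      · rw [Function.update_of_ne h, Equiv.swap_apply_of_ne_of_ne (by simpa using h) (by simp)]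
    rw [this, hgi]

lemma Psi_orth {E : Type*} [MeasurableSpace E] (P : Measure E) [IsProbabilityMeasure P]
    {n k : ℕ} {j : Fin k → Option (Fin n)} (hv : Valid j) {f : (Fin k → E) → ℝ}
    (hf : MemLp f 2 (pp P k)) {g : (Fin n → E) → ℝ} (hg : MemLp g 2 (pp P n))
    {i : Fin n} (hgi : NotDep g i) (hi : i ∈ rng j) :
    ∫ x, Psi P f j x * g x ∂(pp P n) = 0 := by
  obtain ⟨l, hl⟩ := mem_rng.1 hi
  have hintg : ∀ A, Integrable (fun x => (-1 : ℝ) ^ A.card * Phi P f (drp A j) x * g x) (pp P n) :=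
    fun A => ((Phi_memLp P (drp_valid hv A) hf).const_mul _).integrable_mul hg
  have e : ∫ x, Psi P f j x * g x ∂(pp P n) = ∑ A ∈ (som j).powerset,
      ∫ x, (-1 : ℝ) ^ A.card * Phi P f (drp A j) x * g x ∂(pp P n) := by
    rw [← integral_finsetSum _ fun A _ => hintg A]
    congr 1; funext x
    unfold Psi alt
    rw [Finset.sum_mul]
  have hls : l ∈ som j := by simp [som, hl]
  rw [e, ← Finset.insert_erase hls, Finset.sum_powerset_insert (Finset.notMem_erase _ _),
    ← Finset.sum_add_distrib]
  refine Finset.sum_eq_zero fun A hA => ?_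
  have hlA : l ∉ A := fun h => Finset.notMem_erase l (som j) (Finset.mem_powerset.1 hA h)
  simp only [mul_assoc]
  rw [integral_const_mul, integral_const_mul, Finset.card_insert_of_notMem hlA,
    Phi_swap P (drp_valid hv A) hf hg hgi (l := l) (j2 := drp (insert l A) j)
      (by simp [drp, hlA, hl])]
  · ring
  · funext l'
    by_cases h : l' = l
    · subst h; simp [drp]
    · simp [drp, h]

lemma Phi_notDep {E : Type*} [MeasurableSpace E] (P : Measure E)
    {n k : ℕ} {j : Fin k → Option (Fin n)} (f : (Fin k → E) → ℝ) {i : Fin n} (hi : i ∉ rng j) :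
    NotDep (Phi P f j) i := by
  intro x t
  unfold Phi
  congr 1; funext y
  congr 1; funext l
  unfold mix
  cases e : j l with
  | none => rfl
  | some i' =>
    simp only [Option.elim]
    rw [Function.update_of_ne]
    rintro rfl
    exact hi (mem_rng.2 ⟨l, e⟩)

lemma Psi_notDep {E : Type*} [MeasurableSpace E] (P : Measure E)
    {n k : ℕ} {j : Fin k → Option (Fin n)} (f : (Fin k → E) → ℝ) {i : Fin n} (hi : i ∉ rng j) :
    NotDep (Psi P f j) i := by
  intro x t
  unfold Psi alt
  refine Finset.sum_congr rfl fun A _ => ?_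
  exact congrArg _ (Phi_notDep P f (fun h => hi (rng_drp_subset j A h)) x t)

lemma Psi_orth2 {E : Type*} [MeasurableSpace E] (P : Measure E) [IsProbabilityMeasure P]
    {n k k' : ℕ} {j : Fin k → Option (Fin n)} (hv : Valid j) {f : (Fin k → E) → ℝ}
    (hf : MemLp f 2 (pp P k)) {j' : Fin k' → Option (Fin n)} (hv' : Valid j')
    {f' : (Fin k' → E) → ℝ} (hf' : MemLp f' 2 (pp P k')) (hne : rng j ≠ rng j') :
    ∫ x, Psi P f j x * Psi P f' j' x ∂(pp P n) = 0 := by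
  by_cases h : rng j ⊆ rng j'
  · have h2 : ¬ rng j' ⊆ rng j := fun h' => hne (h.antisymm h')
    obtain ⟨i, hi, hi'⟩ := Finset.not_subset.1 h2
    have := Psi_orth P hv' hf' (Psi_memLp P hv hf) (Psi_notDep P f hi') hi
    simpa only [mul_comm] using this
  · obtain ⟨i, hi, hi'⟩ := Finset.not_subset.1 h
    exact Psi_orth P hv hf (Psi_memLp P hv' hf') (Psi_notDep P f' hi') hi

lemma Psi_proj {E : Type*} [MeasurableSpace E] (P : Measure E) [IsProbabilityMeasure P]
    {n k k' : ℕ} {j : Fin k → Option (Fin n)} (hv : Valid j) {f : (Fin k → E) → ℝ}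
    (hf : MemLp f 2 (pp P k)) {j' : Fin k' → Option (Fin n)} (hv' : Valid j')
    {f' : (Fin k' → E) → ℝ} (hf' : MemLp f' 2 (pp P k')) (he : rng j = rng j') :
    ∫ x, Psi P f j x * Psi P f' j' x ∂(pp P n) = ∫ x, Psi P f j x * Phi P f' j' x ∂(pp P n) := by
  have hintg : ∀ A, Integrable (fun x => Psi P f j x * ((-1 : ℝ) ^ A.card * Phi P f' (drp A j') x))
      (pp P n) :=
    fun A => (Psi_memLp P hv hf).integrable_mul ((Phi_memLp P (drp_valid hv' A) hf').const_mul _)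
  have e : ∫ x, Psi P f j x * Psi P f' j' x ∂(pp P n) = ∑ A ∈ (som j').powerset,
      ∫ x, Psi P f j x * ((-1 : ℝ) ^ A.card * Phi P f' (drp A j') x) ∂(pp P n) := by
    rw [← integral_finsetSum _ fun A _ => hintg A]
    congr 1; funext x
    conv_lhs => rw [Psi.eq_1 P f' j', alt]
    rw [Finset.mul_sum]
  rw [e, Finset.sum_eq_single ∅]
  · have : drp ∅ j' = j' := by funext l; simp [drp]
    simp [this]
  · intro A hA hne
    obtain ⟨l, hlA⟩ := Finset.nonempty_iff_ne_empty.2 hne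
    have hls := Finset.mem_powerset.1 hA hlA
    obtain ⟨i, hi⟩ := Option.ne_none_iff_exists'.1 (Finset.mem_filter.1 hls).2
    refine Psi_orth P hv hf ((Phi_memLp P (drp_valid hv' A) hf').const_mul _) (i := i) ?_ ?_
    · intro x t
      have : i ∉ rng (drp A j') := by
        intro h
        obtain ⟨l', hl'⟩ := mem_rng.1 h
        unfold drp at hl'
        split_ifs at hl' with h'
        exact h' (hv' _ _ _ hi hl' ▸ hlA)
      exact congrArg _ (Phi_notDep P f' this x t)
    · rw [he]; exact mem_rng.2 ⟨l, hi⟩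
  · intro h; exact absurd (Finset.empty_mem_powerset _) h

lemma le_of_proj {α : Type*} [MeasurableSpace α] (ν : Measure α) {G F : α → ℝ}
    (hG : MemLp G 2 ν) (hF : MemLp F 2 ν) (h : ∫ x, G x * G x ∂ν = ∫ x, G x * F x ∂ν) :
    ∫ x, G x ^ 2 ∂ν ≤ ∫ x, F x ^ 2 ∂ν := by
  have h0 : 0 ≤ ∫ x, (F x - G x) ^ 2 ∂ν := integral_nonneg fun x => sq_nonneg _
  have e : ∫ x, (F x - G x) ^ 2 ∂ν = ∫ x, (F x ^ 2 + (-2) * (G x * F x) + G x ^ 2) ∂ν := by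
    congr 1; funext x; ring
  have i3 : Integrable (fun x => (-2) * (G x * F x)) ν := (imul hG hF).const_mul _
  have i4 : Integrable (fun x => F x ^ 2 + (-2) * (G x * F x)) ν := hF.integrable_sq.add i3
  rw [e, integral_add i4 hG.integrable_sq, integral_add hF.integrable_sq i3,
    integral_const_mul, ← h] at h0
  have e2 : ∫ x, G x ^ 2 ∂ν = ∫ x, G x * G x ∂ν := by congr 1; funext x; ring
  linarith

lemma Psi_sq_le {E : Type*} [MeasurableSpace E] (P : Measure E) [IsProbabilityMeasure P]
    {n k : ℕ} {j : Fin k → Option (Fin n)} (hv : Valid j) {f : (Fin k → E) → ℝ}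
    (hf : MemLp f 2 (pp P k)) :
    ∫ x, Psi P f j x ^ 2 ∂(pp P n) ≤ ∫ x, Phi P f j x ^ 2 ∂(pp P n) :=
  le_of_proj _ (Psi_memLp P hv hf) (Phi_memLp P hv hf) (Psi_proj P hv hf hv hf rfl)

lemma orth_sum {α ι : Type*} [MeasurableSpace α] (ν : Measure α) (s : Finset ι)
    {Y : ι → α → ℝ} (hY : ∀ r ∈ s, MemLp (Y r) 2 ν)
    (ho : ∀ r ∈ s, ∀ r' ∈ s, r ≠ r' → ∫ x, Y r x * Y r' x ∂ν = 0) :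
    ∫ x, (∑ r ∈ s, Y r x) ^ 2 ∂ν = ∑ r ∈ s, ∫ x, Y r x ^ 2 ∂ν := by
  have e : ∀ x, (∑ r ∈ s, Y r x) ^ 2 = ∑ r ∈ s, ∑ r' ∈ s, Y r x * Y r' x := by
    intro x; rw [sq, Finset.sum_mul_sum]
  simp only [e]
  rw [integral_finsetSum _ fun r hr => integrable_finsetSum _ fun r' hr' =>
    imul (hY r hr) (hY r' hr')]
  refine Finset.sum_congr rfl fun r hr => ?_
  rw [integral_finsetSum _ fun r' hr' => imul (hY r hr) (hY r' hr'),
    Finset.sum_eq_single r]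
  · congr 1; funext x; ring
  · intro r' hr' hne; exact ho r hr r' hr' hne.symm
  · intro h; exact absurd hr h

end TSM

namespace TSM

lemma mix_measurable {E : Type*} [MeasurableSpace E] {n k : ℕ} (j : Fin k → Option (Fin n))
    (x : Fin n → E) : Measurable (mix j x) := by
  refine measurable_pi_lambda _ fun l => ?_
  unfold mix
  cases j l with
  | none => exact measurable_pi_apply l
  | some i => exact measurable_const

lemma measurableSet_inj {E : Type*} [MeasurableSpace E]
    (hdiag : MeasurableSet {p : E × E | p.1 = p.2}) (k : ℕ) :
    MeasurableSet {u : Fin k → E | Function.Injective u} := by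
  have : {u : Fin k → E | Function.Injective u} =
      ⋂ l : Fin k, ⋂ l' : Fin k, ⋂ _ : l ≠ l', {u : Fin k → E | u l = u l'}ᶜ := by
    ext u
    simp only [Set.mem_ofPred_eq, Set.mem_iInter, Set.mem_compl_iff]
    exact ⟨fun h l l' hne he => hne (h he), fun h l l' he => by
      by_contra hne; exact h l l' hne he⟩
  rw [this]
  refine MeasurableSet.iInter fun l => MeasurableSet.iInter fun l' => MeasurableSet.iInter fun _ => ?_
  refine MeasurableSet.compl ?_
  have hm : Measurable fun u : Fin k → E => (u l, u l') := by fun_prop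
  exact hm hdiag

lemma inj_ae {E : Type*} [MeasurableSpace E] (P : Measure E) [IsProbabilityMeasure P]
    [NullSingletonClass P] (hdiag : MeasurableSet {p : E × E | p.1 = p.2}) (k : ℕ) :
    ∀ᵐ u ∂(pp P k), Function.Injective u := by
  have h : ∀ l l' : Fin k, l ≠ l' → ∀ᵐ u ∂(pp P k), u l ≠ u l' := by
    intro l l' hne
    have h1 : iIndepFun (fun (i : Fin k) (z : Fin k → E) => z i) (pp P k) :=
      iIndepFun_pi (X := fun _ => id) (fun _ => aemeasurable_id)
    have h2 := (indepFun_iff_map_prod_eq_prod_map_map (measurable_pi_apply l).aemeasurable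
      (measurable_pi_apply l').aemeasurable).1 (h1.indepFun hne)
    rw [(measurePreserving_eval (fun _ : Fin k => P) l).map_eq,
      (measurePreserving_eval (fun _ : Fin k => P) l').map_eq] at h2
    have h3 : ∀ᵐ p ∂(P.prod P), ¬ p.1 = p.2 := by
      rw [ae_iff]
      simp only [not_not]
      rw [Measure.measure_prod_null hdiag]
      refine Eventually.of_forall fun t => ?_
      have : Prod.mk t ⁻¹' {p : E × E | p.1 = p.2} = {t} := by
        ext s; simp [eq_comm]
      show P (Prod.mk t ⁻¹' _) = 0
      rw [this]; simp
    rw [← h2] at h3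
    exact ae_of_ae_map ((measurable_pi_apply l).prodMk (measurable_pi_apply l')).aemeasurable h3
  have h' : ∀ᵐ u ∂(pp P k), ∀ l l' : Fin k, l ≠ l' → u l ≠ u l' := by
    rw [ae_all_iff]; intro l
    rw [ae_all_iff]; intro l'
    by_cases hne : l = l'
    · exact Eventually.of_forall fun u h => absurd hne h
    · filter_upwards [h l l' hne] with u hu _ using hu
  filter_upwards [h'] with u hu l l' he
  by_contra hne; exact hu l l' hne he

lemma ae_push {E : Type*} [MeasurableSpace E] (P : Measure E) [IsProbabilityMeasure P]
    {n k : ℕ} {j : Fin k → Option (Fin n)} (hv : Valid j) {p : (Fin k → E) → Prop}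
    (hp : ∀ᵐ u ∂(pp P k), p u) :
    ∀ᵐ x ∂(pp P n), ∀ᵐ u ∂(Measure.map (mix j x) (pp P k)), p u := by
  obtain ⟨N, hN1, hN2, hN3⟩ := exists_measurable_superset_of_null (ae_iff.1 hp)
  have h1 : ∀ᵐ u ∂(pp P k), u ∉ N := by
    rw [ae_iff]; simpa using hN3
  have h2 := Measure.ae_ae_of_ae_prod ((mix_mp P (n := n) hv).quasiMeasurePreserving.ae h1)
  filter_upwards [h2] with x hx
  have : ∀ᵐ u ∂(Measure.map (mix j x) (pp P k)), u ∉ N := by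
    rw [ae_map_iff (mix_measurable j x).aemeasurable hN2.compl]
    exact hx
  filter_upwards [this] with u hu
  by_contra h
  exact hu (hN1 h)

/-- Mass of a slot. -/
noncomputable def wn (n : ℕ) : Option (Fin n) → ℝ≥0∞
  | none => n
  | some _ => 1

/-- Law of a slot. -/
noncomputable def kap {E : Type*} [MeasurableSpace E] (P : Measure E) {n : ℕ} (x : Fin n → E) :
    Option (Fin n) → Measure E
  | none => P
  | some i => Measure.dirac (x i)

instance mixMeasure_finite {E : Type*} [MeasurableSpace E] (P : Measure E) [IsProbabilityMeasure P]
    (n : ℕ) (x : Fin n → E) (b : Bool) : IsFiniteMeasure (mixMeasure P n x b) := by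
  cases b <;> unfold mixMeasure <;> infer_instance

instance kap_prob {E : Type*} [MeasurableSpace E] (P : Measure E) [IsProbabilityMeasure P]
    {n : ℕ} (x : Fin n → E) (o : Option (Fin n)) : IsProbabilityMeasure (kap P x o) := by
  cases o <;> unfold kap <;> infer_instance

lemma map_mix {E : Type*} [MeasurableSpace E] (P : Measure E) [IsProbabilityMeasure P]
    {n k : ℕ} (j : Fin k → Option (Fin n)) (x : Fin n → E) :
    Measure.map (mix j x) (pp P k) = Measure.pi fun l => kap P x (j l) := by
  have hm : ∀ l, Measurable (fun t : E => (j l).elim t x) := by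
    intro l
    cases j l with
    | none => exact measurable_id
    | some i => exact measurable_const
  have hk : ∀ l, Measure.map (fun t : E => (j l).elim t x) P = kap P x (j l) := by
    intro l
    cases j l with
    | none => exact Measure.map_id
    | some i => simp [kap, Measure.map_const]
  haveI : ∀ l, SigmaFinite (Measure.map (fun t : E => (j l).elim t x) P) := by
    intro l; rw [hk]; infer_instance
  have := Measure.pi_map_pi (μ := fun _ : Fin k => P) (f := fun l (t : E) => (j l).elim t x)
    (fun l => (hm l).aemeasurable)
  simp only [hk] at this
  exact this

lemma pi_decomp {E : Type*} [MeasurableSpace E] (P : Measure E) [IsProbabilityMeasure P]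
    {n k : ℕ} (x : Fin n → E) (ε : Fin k → Bool) :
    (Measure.pi fun l => mixMeasure P n x (ε l)) =
      ∑ j : Fin k → Option (Fin n) with (fun l => (j l).isSome) = ε,
        (∏ l, wn n (j l)) • Measure.map (mix j x) (pp P k) := by
  refine Measure.pi_eq fun s hs => ?_
  rw [Measure.finsetSum_apply]
  simp only [Measure.smul_apply, map_mix, Measure.pi_pi, smul_eq_mul, ← Finset.prod_mul_distrib]
  have hpf : (Finset.univ.filter fun j : Fin k → Option (Fin n) => (fun l => (j l).isSome) = ε) =
      Fintype.piFinset fun l => Finset.univ.filter fun o : Option (Fin n) => o.isSome = ε l := by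
    ext j; simp [funext_iff]
  rw [hpf, ← Finset.prod_univ_sum (fun l => Finset.univ.filter fun o : Option (Fin n) => o.isSome = ε l)
    (fun l o => wn n o * kap P x o (s l))]
  refine Finset.prod_congr rfl fun l _ => ?_
  rw [Finset.sum_filter, Fintype.sum_option]
  cases ε l
  · simp [wn, kap, mixMeasure]
  · simp [wn, kap, mixMeasure]

lemma wt_wn {n k : ℕ} (j : Fin k → Option (Fin n)) (ε : Fin k → Bool)
    (h : (fun l => (j l).isSome) = ε) :
    (-1 : ℝ) ^ (Finset.univ.filter fun i => ε i = false).card * (∏ l, wn n (j l)).toReal =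
      ∏ l, wt n (j l) := by
  rw [ENNReal.toReal_prod, ← Finset.prod_const, Finset.prod_filter, ← Finset.prod_mul_distrib]
  refine Finset.prod_congr rfl fun l _ => ?_
  subst h
  cases e : j l <;> simp [wn, wt, e]

lemma wn_ne_top {n k : ℕ} (j : Fin k → Option (Fin n)) : (∏ l, wn n (j l)) ≠ ∞ := by
  refine ENNReal.prod_ne_top fun l _ => ?_
  cases j l <;> simp [wn]

open scoped Classical in
lemma empInt_eq {E : Type*} [MeasurableSpace E] (P : Measure E) [IsProbabilityMeasure P]
    [NullSingletonClass P] (hdiag : MeasurableSet {p : E × E | p.1 = p.2}) {n k : ℕ} (a : ℝ)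
    {f : (Fin k → E) → ℝ} (hf : MemLp f 2 (pp P k)) :
    ∀ᵐ x ∂(pp P n), empInt P n a x k f = (Real.sqrt a)⁻¹ ^ k *
      ∑ j : Fin k → Option (Fin n) with Valid j, (∏ l, wt n (j l)) * Phi P f j x := by
  have hall : ∀ᵐ x ∂(pp P n), ∀ j : Fin k → Option (Fin n), Valid j →
      (∀ᵐ u ∂(Measure.map (mix j x) (pp P k)), Function.Injective u) ∧
      AEStronglyMeasurable f (Measure.map (mix j x) (pp P k)) ∧
      Integrable (fun y => f (mix j x y)) (pp P k) := by
    rw [ae_all_iff]; intro j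
    by_cases hv : Valid j
    · filter_upwards [ae_push P hv (inj_ae P hdiag k), ae_push P hv hf.1.ae_eq_mk,
        ae_memLp _ _ (mix_memLp P (n := n) hv hf)] with x h1 h2 h3 _
      exact ⟨h1, ⟨hf.1.mk f, hf.1.stronglyMeasurable_mk, h2⟩, h3.integrable (by norm_num)⟩
    · exact Eventually.of_forall fun x h => absurd h hv
  filter_upwards [hall] with x hx
  unfold empInt
  congr 1
  have hI := measurableSet_inj hdiag k
  set I : Set (Fin k → E) := {u | Function.Injective u} with hIdef
  have hone : ∀ j : Fin k → Option (Fin n),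
      Integrable (I.indicator f) (Measure.map (mix j x) (pp P k)) ∧
      ∫ u, I.indicator f u ∂(Measure.map (mix j x) (pp P k)) = if Valid j then Phi P f j x else 0 := by
    intro j
    split_ifs with hv
    · obtain ⟨h1, h2, h3⟩ := hx j hv
      have he : I.indicator f =ᵐ[Measure.map (mix j x) (pp P k)] f := by
        filter_upwards [h1] with u hu
        exact Set.indicator_of_mem (show u ∈ I from hu) f
      refine ⟨?_, ?_⟩
      · rw [integrable_congr he, integrable_map_measure h2 (mix_measurable j x).aemeasurable]
        exact h3
      · rw [integral_congr_ae he, integral_map (mix_measurable j x).aemeasurable h2]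
        rfl
    · have he : I.indicator f =ᵐ[Measure.map (mix j x) (pp P k)] fun _ => 0 := by
        have : ∀ᵐ u ∂(Measure.map (mix j x) (pp P k)), u ∉ I := by
          rw [ae_map_iff (mix_measurable j x).aemeasurable hI.compl]
          refine Eventually.of_forall fun y hy => hv ?_
          intro l l' i hl hl'
          apply hy
          simp [mix, hl, hl']
        filter_upwards [this] with u hu
        exact Set.indicator_of_notMem hu f
      refine ⟨?_, ?_⟩
      · rw [integrable_congr he]; exact integrable_zero _ _ _
      · rw [integral_congr_ae he]; simp
  have hε : ∀ ε : Fin k → Bool, (-1 : ℝ) ^ (Finset.univ.filter fun i => ε i = false).card *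
        ∫ u in I, f u ∂(Measure.pi fun i => mixMeasure P n x (ε i)) =
      ∑ j : Fin k → Option (Fin n) with (fun l => (j l).isSome) = ε,
        (if Valid j then (∏ l, wt n (j l)) * Phi P f j x else 0) := by
    intro ε
    rw [← integral_indicator hI, pi_decomp, integral_finset_sum_measure]
    · rw [Finset.mul_sum]
      refine Finset.sum_congr rfl fun j hj => ?_
      rw [integral_smul_measure, (hone j).2, smul_eq_mul, ← mul_assoc,
        wt_wn j ε (Finset.mem_filter.1 hj).2]
      split_ifs <;> simp
    · intro j _
      exact (hone j).1.smul_measure (wn_ne_top j)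
  rw [Finset.sum_congr rfl fun ε _ => hε ε, Finset.sum_fiberwise, Finset.sum_filter]

end TSM

namespace TSM

lemma full_exists {n k : ℕ} {j : Fin k → Option (Fin n)} (hv : Valid j) (hf : Full j) :
    ∃ i : Fin k → Fin n, Function.Injective i ∧ j = fun l => some (i l) := by
  have h : ∀ l, ∃ i, j l = some i := fun l => Option.ne_none_iff_exists'.1 (hf l)
  choose i hi using h
  refine ⟨i, fun l l' e => hv l l' (i l) (hi l) (by rw [hi l', e]), funext hi⟩

lemma card_rng_full {n k : ℕ} {j : Fin k → Option (Fin n)} (hv : Valid j) (hf : Full j) :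
    (rng j).card = k := by
  obtain ⟨i, hi, rfl⟩ := full_exists hv hf
  have : rng (fun l => some (i l)) = Finset.univ.map ⟨i, hi⟩ := by
    ext t; simp [mem_rng]
  rw [this]; simp

lemma card_rng_le {n k : ℕ} (j : Fin k → Option (Fin n)) : (rng j).card ≤ k := by
  classical
  have h : (rng j).map Function.Embedding.some ⊆ Finset.univ.image j := by
    intro o ho
    obtain ⟨i, hi, rfl⟩ := Finset.mem_map.1 ho
    obtain ⟨l, hl⟩ := mem_rng.1 hi
    exact Finset.mem_image.2 ⟨l, Finset.mem_univ _, hl⟩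
  have := (Finset.card_le_card h).trans Finset.card_image_le
  simpa using this

open scoped Classical in
/-- Indices with a given range, all slots filled. -/
noncomputable def fullSet (n k : ℕ) (R : Finset (Fin n)) : Finset (Fin k → Option (Fin n)) :=
  Finset.univ.filter fun j => (Valid j ∧ Full j) ∧ rng j = R

lemma mem_fullSet {n k : ℕ} {R : Finset (Fin n)} {j : Fin k → Option (Fin n)} :
    j ∈ fullSet n k R ↔ (Valid j ∧ Full j) ∧ rng j = R := by
  simp [fullSet]

lemma Phi_full {E : Type*} [MeasurableSpace E] (P : Measure E) [IsProbabilityMeasure P] {n k : ℕ}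
    (f : (Fin k → E) → ℝ) (i : Fin k → Fin n) (x : Fin n → E) :
    Phi P f (fun l => some (i l)) x = f (fun l => x (i l)) := by
  unfold Phi mix
  simp

lemma sum_full {E : Type*} [MeasurableSpace E] (P : Measure E) [IsProbabilityMeasure P] {n k : ℕ}
    (f : (Fin k → E) → ℝ) {i0 : Fin k → Fin n} (hi : Function.Injective i0)
    {R : Finset (Fin n)} (hR : rng (fun l => some (i0 l)) = R) (x : Fin n → E) :
    ∑ j ∈ fullSet n k R, Phi P f j x = k.factorial * symmetrize k f (fun l => x (i0 l)) := by
  have hk : (k.factorial : ℝ) ≠ 0 := by exact_mod_cast k.factorial_ne_zero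
  unfold symmetrize
  rw [mul_inv_cancel_left₀ hk]
  symm
  refine Finset.sum_bij (fun σ _ => fun l => some (i0 (σ l))) ?_ ?_ ?_ ?_
  · intro σ _
    rw [mem_fullSet]
    refine ⟨⟨?_, fun l => by simp⟩, ?_⟩
    · intro l l' i h h'
      simp only [Option.some.injEq] at h h'
      exact σ.injective (hi (h.trans h'.symm))
    · rw [← hR]
      ext t
      simp only [mem_rng, Option.some.injEq]
      exact ⟨fun ⟨l, hl⟩ => ⟨σ l, hl⟩, fun ⟨l, hl⟩ => ⟨σ.symm l, by simpa using hl⟩⟩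
  · intro σ _ τ _ h
    ext l
    have := congrFun h l
    simp only [Option.some.injEq] at this
    exact congrArg Fin.val (hi this)
  · intro j hj
    obtain ⟨⟨hv, hfu⟩, hr⟩ := mem_fullSet.1 hj
    obtain ⟨i, hi', rfl⟩ := full_exists hv hfu
    have h : ∀ l, ∃ l', i0 l' = i l := by
      intro l
      have : i l ∈ rng (fun l => some (i0 l)) := by
        rw [hR, ← hr]; exact mem_rng.2 ⟨l, rfl⟩
      obtain ⟨l', hl'⟩ := mem_rng.1 this
      exact ⟨l', by simpa using hl'⟩
    choose σ hσ using h
    have hinj : Function.Injective σ := fun l l' e => hi' (by rw [← hσ, ← hσ, e])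
    refine ⟨Equiv.ofBijective σ (Finite.injective_iff_bijective.1 hinj), Finset.mem_univ _, ?_⟩
    funext l
    simp [hσ]
  · intro σ _
    rw [Phi_full]
    rfl

lemma symm_memLp {E : Type*} [MeasurableSpace E] (P : Measure E) [IsProbabilityMeasure P] {k : ℕ}
    {f : (Fin k → E) → ℝ} (hf : MemLp f 2 (pp P k)) : MemLp (symmetrize k f) 2 (pp P k) := by
  unfold symmetrize
  have h : ∀ σ ∈ (Finset.univ : Finset (Equiv.Perm (Fin k))),
      MemLp (fun u : Fin k → E => f (u ∘ σ)) 2 (pp P k) := fun σ _ =>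
    hf.comp_measurePreserving (comp_mp P (fun l => σ l) σ.injective)
  exact (memLp_finsetSum _ h).const_mul _

lemma sums_orth {E : Type*} [MeasurableSpace E] (P : Measure E) [IsProbabilityMeasure P]
    {n k k' : ℕ} {f : (Fin k → E) → ℝ} (hf : MemLp f 2 (pp P k))
    {f' : (Fin k' → E) → ℝ} (hf' : MemLp f' 2 (pp P k'))
    (A : Finset (Fin k → Option (Fin n))) (A' : Finset (Fin k' → Option (Fin n)))
    (hA : ∀ j ∈ A, Valid j) (hA' : ∀ j ∈ A', Valid j)
    (hne : ∀ j ∈ A, ∀ j' ∈ A', rng j ≠ rng j')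
    (c : (Fin k → Option (Fin n)) → ℝ) (c' : (Fin k' → Option (Fin n)) → ℝ) :
    ∫ x, (∑ j ∈ A, c j * Psi P f j x) * (∑ j ∈ A', c' j * Psi P f' j x) ∂(pp P n) = 0 := by
  simp only [Finset.sum_mul_sum]
  have hi : ∀ j ∈ A, ∀ j' ∈ A', Integrable (fun x => c j * Psi P f j x * (c' j' * Psi P f' j' x))
      (pp P n) := fun j hj j' hj' =>
    imul ((Psi_memLp P (hA j hj) hf).const_mul _) ((Psi_memLp P (hA' j' hj') hf').const_mul _)
  rw [integral_finsetSum _ fun j hj => integrable_finsetSum _ fun j' hj' => hi j hj j' hj']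
  refine Finset.sum_eq_zero fun j hj => ?_
  rw [integral_finsetSum _ fun j' hj' => hi j hj j' hj']
  refine Finset.sum_eq_zero fun j' hj' => ?_
  have e : ∀ x, c j * Psi P f j x * (c' j' * Psi P f' j' x) =
      (c j * c' j') * (Psi P f j x * Psi P f' j' x) := fun x => by ring
  simp only [e]
  rw [integral_const_mul, Psi_orth2 P (hA j hj) hf (hA' j' hj') hf' (hne j hj j' hj'), mul_zero]

lemma full_bound {E : Type*} [MeasurableSpace E] (P : Measure E) [IsProbabilityMeasure P]
    {n k : ℕ} {f : (Fin k → E) → ℝ} (hf : MemLp f 2 (pp P k)) (R : Finset (Fin n)) :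
    ∫ x, (∑ j ∈ fullSet n k R, Psi P f j x) ^ 2 ∂(pp P n) ≤
      if R.card = k then (k.factorial : ℝ) ^ 2 * ∫ u, symmetrize k f u ^ 2 ∂(pp P k) else 0 := by
  rcases (fullSet n k R).eq_empty_or_nonempty with he | ⟨j0, hj0⟩
  · rw [he]
    simp only [Finset.sum_empty]
    have : ∫ x : Fin n → E, (0 : ℝ) ^ 2 ∂(pp P n) = 0 := by simp
    rw [this]
    split_ifs
    · exact mul_nonneg (sq_nonneg _) (integral_nonneg fun _ => sq_nonneg _)
    · exact le_rfl
  · obtain ⟨⟨hv, hfu⟩, hr⟩ := mem_fullSet.1 hj0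
    rw [if_pos (by rw [← hr]; exact card_rng_full hv hfu)]
    have hvA : ∀ j ∈ fullSet n k R, Valid j := fun j hj => (mem_fullSet.1 hj).1.1
    have hG : MemLp (fun x => ∑ j ∈ fullSet n k R, Psi P f j x) 2 (pp P n) :=
      memLp_finsetSum _ fun j hj => Psi_memLp P (hvA j hj) hf
    have hF : MemLp (fun x => ∑ j ∈ fullSet n k R, Phi P f j x) 2 (pp P n) :=
      memLp_finsetSum _ fun j hj => Phi_memLp P (hvA j hj) hf
    refine (le_of_proj _ hG hF ?_).trans ?_
    · simp only [Finset.sum_mul_sum]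
      rw [integral_finsetSum _ fun j hj => integrable_finsetSum _ fun j' hj' =>
          imul (Psi_memLp P (hvA j hj) hf) (Psi_memLp P (hvA j' hj') hf),
        integral_finsetSum _ fun j hj => integrable_finsetSum _ fun j' hj' =>
          imul (Psi_memLp P (hvA j hj) hf) (Phi_memLp P (hvA j' hj') hf)]
      refine Finset.sum_congr rfl fun j hj => ?_
      rw [integral_finsetSum _ fun j' hj' =>
          imul (Psi_memLp P (hvA j hj) hf) (Psi_memLp P (hvA j' hj') hf),
        integral_finsetSum _ fun j' hj' =>
          imul (Psi_memLp P (hvA j hj) hf) (Phi_memLp P (hvA j' hj') hf)]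
      refine Finset.sum_congr rfl fun j' hj' => ?_
      exact Psi_proj P (hvA j hj) hf (hvA j' hj') hf
        (by rw [(mem_fullSet.1 hj).2, (mem_fullSet.1 hj').2])
    · obtain ⟨i0, hi0, rfl⟩ := full_exists hv hfu
      simp only [sum_full P f hi0 hr, mul_pow]
      rw [integral_const_mul, integral_mp (F := fun u => symmetrize k f u ^ 2) (comp_mp P i0 hi0)
        ((symm_memLp P hf).1.pow 2)]

open scoped Classical in
lemma main_bound {E : Type*} [MeasurableSpace E] (P : Measure E) [IsProbabilityMeasure P]
    {n : ℕ} {a : ℝ} (ha : 0 < a) {h : (k : ℕ) → (Fin k → E) → ℝ}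
    (hh : ∀ k, MemLp (h k) 2 (pp P k)) (s : Finset ℕ) :
    ∫ x, (∑ k ∈ s, (Real.sqrt a)⁻¹ ^ k *
      ∑ j : Fin k → Option (Fin n) with Valid j ∧ Full j, Psi P (h k) j x) ^ 2 ∂(pp P n) ≤
    ∑ k ∈ s, k.factorial * ((n / a) ^ k * ∫ u, symmetrize k (h k) u ^ 2 ∂(pp P k)) := by
  set Y : ℕ × Finset (Fin n) → (Fin n → E) → ℝ := fun q x =>
    ∑ j ∈ fullSet n q.1 q.2, (Real.sqrt a)⁻¹ ^ q.1 * Psi P (h q.1) j x with hYdef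
  have hvA : ∀ k R, ∀ j ∈ fullSet n k R, Valid j := fun k R j hj => (mem_fullSet.1 hj).1.1
  have hY : ∀ q, MemLp (Y q) 2 (pp P n) := fun q =>
    memLp_finsetSum _ fun j hj => (Psi_memLp P (hvA _ _ j hj) (hh q.1)).const_mul _
  have e1 : ∀ x, (∑ k ∈ s, (Real.sqrt a)⁻¹ ^ k *
      ∑ j : Fin k → Option (Fin n) with Valid j ∧ Full j, Psi P (h k) j x) =
      ∑ q ∈ s ×ˢ (Finset.univ : Finset (Finset (Fin n))), Y q x := by
    intro x
    rw [Finset.sum_product]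
    refine Finset.sum_congr rfl fun k _ => ?_
    rw [Finset.mul_sum, ← Finset.sum_fiberwise _ (fun j => rng j)]
    refine Finset.sum_congr rfl fun R _ => ?_
    rw [Finset.filter_filter]
    rfl
  simp only [e1]
  rw [orth_sum _ _ (fun q _ => hY q)]
  · rw [Finset.sum_product]
    refine Finset.sum_le_sum fun k _ => ?_
    have hsq : ((Real.sqrt a)⁻¹ ^ k) ^ 2 = (a⁻¹) ^ k := by
      rw [← pow_mul, mul_comm k 2, pow_mul, inv_pow, Real.sq_sqrt ha.le]
    have hb : ∀ R : Finset (Fin n), ∫ x, Y (k, R) x ^ 2 ∂(pp P n) ≤ (a⁻¹) ^ k *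
        if R.card = k then (k.factorial : ℝ) ^ 2 * ∫ u, symmetrize k (h k) u ^ 2 ∂(pp P k) else 0 := by
      intro R
      simp only [hYdef, ← Finset.mul_sum, mul_pow, hsq]
      rw [integral_const_mul]
      exact mul_le_mul_of_nonneg_left (full_bound P (hh k) R) (by positivity)
    refine (Finset.sum_le_sum fun R _ => hb R).trans ?_
    rw [← Finset.mul_sum, ← Finset.sum_filter, Finset.sum_const, nsmul_eq_mul]
    have hc : (Finset.univ.filter fun R : Finset (Fin n) => R.card = k).card = n.choose k := by
      have : (Finset.univ.filter fun R : Finset (Fin n) => R.card = k) =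
          Finset.powersetCard k Finset.univ := by
        ext R; simp [Finset.mem_powersetCard]
      rw [this]; simp
    rw [hc]
    set S := ∫ u, symmetrize k (h k) u ^ 2 ∂(pp P k)
    have hS : 0 ≤ S := integral_nonneg fun _ => sq_nonneg _
    have hd : (k.factorial : ℝ) * n.choose k ≤ (n : ℝ) ^ k := by
      have := Nat.descFactorial_le_pow n k
      rw [Nat.descFactorial_eq_factorial_mul_choose] at this
      exact_mod_cast this
    calc (a⁻¹) ^ k * ((n.choose k : ℝ) * ((k.factorial : ℝ) ^ 2 * S))
        = (a⁻¹) ^ k * k.factorial * S * (k.factorial * n.choose k) := by ring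
      _ ≤ (a⁻¹) ^ k * k.factorial * S * (n : ℝ) ^ k :=
          mul_le_mul_of_nonneg_left hd (by positivity)
      _ = _ := by rw [div_pow, inv_pow]; field_simp
  · rintro ⟨k, R⟩ - ⟨k', R'⟩ - hne
    refine sums_orth P (hh k) (hh k') _ _ (hvA k R) (hvA k' R') ?_ _ _
    intro j hj j' hj' he
    obtain ⟨⟨h1, h2⟩, h3⟩ := mem_fullSet.1 hj
    obtain ⟨⟨h1', h2'⟩, h3'⟩ := mem_fullSet.1 hj'
    have hR : R = R' := by rw [← h3, ← h3', he]
    have hk : k = k' := by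
      have e1 := card_rng_full h1 h2
      have e2 := card_rng_full h1' h2'
      rw [← e1, ← e2, he]
    exact hne (by rw [hR, hk])

lemma sum_none {n k : ℕ} : ∑ j : Fin k → Option (Fin n), (n : ℝ) ^ (som j)ᶜ.card = (2 * n) ^ k := by
  have h : ∀ j : Fin k → Option (Fin n), (n : ℝ) ^ (som j)ᶜ.card =
      ∏ l, (if j l = none then (n : ℝ) else 1) := by
    intro j
    rw [← Finset.prod_const, Finset.prod_ite]
    simp only [Finset.prod_const_one, mul_one]
    congr 1
    ext l; simp [som]
  simp only [h]
  have := (Finset.prod_univ_sum (fun _ : Fin k => (Finset.univ : Finset (Option (Fin n))))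
    (fun _ o => if o = none then (n : ℝ) else 1)).symm
  rw [Fintype.piFinset_univ] at this
  rw [this]
  simp [Fintype.sum_option, two_mul]

open scoped Classical in
lemma fib_card {n k : ℕ} (R : Finset (Fin n)) :
    (Finset.univ.filter fun j : Fin k → Option (Fin n) => rng j = R).card ≤ (k + 1) ^ k := by
  rcases (Finset.univ.filter fun j : Fin k → Option (Fin n) => rng j = R).eq_empty_or_nonempty
    with he | ⟨j0, hj0⟩
  · rw [he]; simp
  have hR : R.card ≤ k := by
    rw [← (Finset.mem_filter.1 hj0).2]; exact card_rng_le j0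
  have hsub : (Finset.univ.filter fun j : Fin k → Option (Fin n) => rng j = R) ⊆
      Fintype.piFinset fun _ : Fin k => Finset.insertNone R := by
    intro j hj
    rw [Fintype.mem_piFinset]
    intro l
    have := (Finset.mem_filter.1 hj).2
    rw [Finset.mem_insertNone]
    intro i hi
    rw [← this]
    exact mem_rng.2 ⟨l, hi⟩
  refine (Finset.card_le_card hsub).trans ?_
  rw [Fintype.card_piFinset]
  simp only [Finset.card_insertNone, Finset.prod_const, Finset.card_univ, Fintype.card_fin]
  gcongr

open scoped Classical in
lemma rem_bound (k : ℕ) : ∃ C : ℝ, 0 ≤ C ∧ ∀ {E : Type*} [MeasurableSpace E] (P : Measure E)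
    [IsProbabilityMeasure P] {n : ℕ} (_ : 1 ≤ n) {a : ℝ} (_ : 0 < a) {f : (Fin k → E) → ℝ}
    (_ : MemLp f 2 (pp P k)) (D : ℝ) (_ : 0 ≤ D)
    (_ : ∀ j : Fin k → Option (Fin n), Valid j → ¬ Full j → ∫ x, Psi P f j x ^ 2 ∂(pp P n) ≤ D),
    ∫ x, ((Real.sqrt a)⁻¹ ^ k * ∑ j : Fin k → Option (Fin n) with Valid j ∧ ¬ Full j,
      Dc n (som j)ᶜ.card (rng j).card * Psi P f j x) ^ 2 ∂(pp P n) ≤ C * ((n / a) ^ k * D) := by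
  obtain ⟨C, hC, hb⟩ := Dc_bound_unif k
  refine ⟨((k + 1) ^ k) * C * 2 ^ k, by positivity, ?_⟩
  intro E _ P _ n hn a ha f hf D hD hPsi
  set A : Finset (Fin n) → Finset (Fin k → Option (Fin n)) := fun R =>
    Finset.univ.filter fun j => (Valid j ∧ ¬ Full j) ∧ rng j = R with hA
  have hmA : ∀ {R j}, j ∈ A R ↔ (Valid j ∧ ¬ Full j) ∧ rng j = R := by
    intro R j; simp [hA]
  set c : (Fin k → Option (Fin n)) → ℝ := fun j => Dc n (som j)ᶜ.card (rng j).card with hc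
  have hY : ∀ R, MemLp (fun x => ∑ j ∈ A R, c j * Psi P f j x) 2 (pp P n) := fun R =>
    memLp_finsetSum _ fun j hj => (Psi_memLp P (hmA.1 hj).1.1 hf).const_mul _
  have e1 : ∀ x, ∑ j : Fin k → Option (Fin n) with Valid j ∧ ¬ Full j,
      Dc n (som j)ᶜ.card (rng j).card * Psi P f j x = ∑ R : Finset (Fin n),
        ∑ j ∈ A R, c j * Psi P f j x := by
    intro x
    rw [← Finset.sum_fiberwise _ (fun j => rng j)]
    refine Finset.sum_congr rfl fun R _ => ?_
    rw [Finset.filter_filter]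
  have hsq : ((Real.sqrt a)⁻¹ ^ k) ^ 2 = (a⁻¹) ^ k := by
    rw [← pow_mul, mul_comm k 2, pow_mul, inv_pow, Real.sq_sqrt ha.le]
  simp only [e1, mul_pow, hsq]
  rw [integral_const_mul, orth_sum _ _ (fun R _ => hY R)]
  · have hR : ∀ R, ∫ x, (∑ j ∈ A R, c j * Psi P f j x) ^ 2 ∂(pp P n) ≤
        ∑ j ∈ A R, ((k + 1) ^ k) * (C * D) * (n : ℝ) ^ (som j)ᶜ.card := by
      intro R
      have hcard : ((A R).card : ℝ) ≤ (k + 1) ^ k := by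
        have h1 : (A R).card ≤ (k + 1) ^ k := by
          refine le_trans (Finset.card_le_card ?_) (fib_card (k := k) R)
          intro j hj
          exact Finset.mem_filter.2 ⟨Finset.mem_univ _, (hmA.1 hj).2⟩
        exact_mod_cast h1
      have hintg : ∀ j ∈ A R, Integrable (fun x => (c j * Psi P f j x) ^ 2) (pp P n) := fun j hj =>
        ((Psi_memLp P (hmA.1 hj).1.1 hf).const_mul _).integrable_sq
      calc ∫ x, (∑ j ∈ A R, c j * Psi P f j x) ^ 2 ∂(pp P n)
          ≤ ∫ x, (A R).card * ∑ j ∈ A R, (c j * Psi P f j x) ^ 2 ∂(pp P n) := by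
            refine integral_mono (hY R).integrable_sq
              ((integrable_finsetSum _ hintg).const_mul _) fun x => ?_
            exact sq_sum_le_card_mul_sum_sq
        _ = (A R).card * ∑ j ∈ A R, c j ^ 2 * ∫ x, Psi P f j x ^ 2 ∂(pp P n) := by
            rw [integral_const_mul, integral_finsetSum _ hintg]
            simp only [mul_pow, integral_const_mul]
        _ ≤ (k + 1) ^ k * ∑ j ∈ A R, (C * (n : ℝ) ^ (som j)ᶜ.card) * D := by
            refine mul_le_mul hcard ?_ ?_ (by positivity)
            · refine Finset.sum_le_sum fun j hj => ?_
              refine mul_le_mul (hb n hn _ _ ?_ (card_rng_le j)) (hPsi j (hmA.1 hj).1.1 (hmA.1 hj).1.2)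
                (integral_nonneg fun _ => sq_nonneg _) (by positivity)
              exact (Finset.card_le_univ _).trans (by simp)
            · exact Finset.sum_nonneg fun j _ => mul_nonneg (sq_nonneg _)
                (integral_nonneg fun _ => sq_nonneg _)
        _ = _ := by
            rw [Finset.mul_sum]
            exact Finset.sum_congr rfl fun j _ => by ring
    have htot : ∑ R : Finset (Fin n), ∑ j ∈ A R, ((k + 1) ^ k) * (C * D) * (n : ℝ) ^ (som j)ᶜ.card ≤
        ((k + 1) ^ k) * (C * D) * (2 * n) ^ k := by
      rw [← sum_none, Finset.mul_sum,
        ← Finset.sum_fiberwise (Finset.univ : Finset (Fin k → Option (Fin n))) (fun j => rng j)]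
      refine Finset.sum_le_sum fun R _ => ?_
      refine Finset.sum_le_sum_of_subset_of_nonneg ?_ fun j _ _ => by positivity
      intro j hj
      exact Finset.mem_filter.2 ⟨Finset.mem_univ _, (hmA.1 hj).2⟩
    calc a⁻¹ ^ k * ∑ R, ∫ x, (∑ j ∈ A R, c j * Psi P f j x) ^ 2 ∂(pp P n)
        ≤ a⁻¹ ^ k * (((k + 1) ^ k) * (C * D) * (2 * n) ^ k) :=
          mul_le_mul_of_nonneg_left ((Finset.sum_le_sum fun R _ => hR R).trans htot) (by positivity)
      _ = _ := by rw [div_pow, inv_pow, mul_pow]; field_simp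
  · intro R _ R' _ hne
    refine sums_orth P hf hf _ _ (fun j hj => (hmA.1 hj).1.1) (fun j hj => (hmA.1 hj).1.1) ?_ _ _
    intro j hj j' hj' he
    exact hne (by rw [← (hmA.1 hj).2, ← (hmA.1 hj').2, he])

end TSM

namespace TSM

lemma le_mu {E : Type*} [MeasurableSpace E] {μ : Measure E} {a : ℕ → ℝ} {P : ℕ → Measure E}
    (h21 : Assumption21 μ a P) {n : ℕ} (hn : 1 ≤ n) :
    ENNReal.ofReal ((n : ℝ) / a n) • P n ≤ μ := by
  obtain ⟨-, -, -, -, h5, h6⟩ := h21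
  rw [Measure.le_iff]
  intro B hB
  rw [Measure.smul_apply, smul_eq_mul]
  refine ge_of_tendsto (h6 B hB) ?_
  filter_upwards [eventually_ge_atTop n] with m hm
  induction m, hm using Nat.le_induction with
  | base => exact le_rfl
  | succ m hm ih =>
    refine ih.trans ?_
    have := h5 B hB m (hn.trans hm)
    push_cast
    exact this

lemma null_P {E : Type*} [MeasurableSpace E] {μ : Measure E} [NullSingletonClass μ] {a : ℕ → ℝ}
    {P : ℕ → Measure E} (h21 : Assumption21 μ a P) {n : ℕ} (hn : 1 ≤ n) :
    NullSingletonClass (P n) := by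
  refine ⟨fun x => ?_⟩
  have h := le_mu h21 hn {x}
  rw [Measure.smul_apply, smul_eq_mul, measure_singleton (μ := μ)] at h
  have h0 := le_antisymm h (zero_le)
  rcases mul_eq_zero.1 h0 with h1 | h1
  · rw [ENNReal.ofReal_eq_zero] at h1
    have : 0 < (n : ℝ) / a n := div_pos (by exact_mod_cast hn) (h21.2.1 n hn)
    linarith
  · exact h1

lemma pi_le {E : Type*} [MeasurableSpace E] {μ ν : Measure E} [SigmaFinite μ]
    [SigmaFinite ν] {c : ℝ≥0∞} (h : c • ν ≤ μ) (k : ℕ) : c ^ k • pp ν k ≤ pp μ k := by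
  rw [Measure.le_iff]
  intro s hs
  have h1 : (c ^ k • pp ν k).toOuterMeasure ≤
      OuterMeasure.pi fun _ : Fin k => μ.toOuterMeasure := by
    rw [OuterMeasure.le_pi]
    intro t _
    show (c ^ k • pp ν k) (Set.pi Set.univ t) ≤ ∏ i, μ (t i)
    rw [Measure.smul_apply, Measure.pi_pi, smul_eq_mul]
    have : c ^ k = ∏ _i : Fin k, c := by simp
    rw [this, ← Finset.prod_mul_distrib]
    exact Finset.prod_le_prod' fun i _ => h (t i)
  have h2 := h1 s
  unfold pp at h2 ⊢
  rw [show (Measure.pi fun _ : Fin k => μ) s =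
    (OuterMeasure.pi fun _ : Fin k => μ.toOuterMeasure) s by
      rw [Measure.pi, toMeasure_apply _ _ hs]]
  exact h2

/-- scaling constant bookkeeping -/
lemma pi_le' {E : Type*} [MeasurableSpace E] {μ : Measure E} [SigmaFinite μ] {a : ℕ → ℝ}
    {P : ℕ → Measure E} [∀ n, IsProbabilityMeasure (P n)]
    (h21 : Assumption21 μ a P) {n : ℕ} (hn : 1 ≤ n) (k : ℕ) :
    ENNReal.ofReal (((n : ℝ) / a n) ^ k) • pp (P n) k ≤ pp μ k := by
  have hpos : 0 < (n : ℝ) / a n := div_pos (by exact_mod_cast hn) (h21.2.1 n hn)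
  rw [ENNReal.ofReal_pow hpos.le]
  exact pi_le (le_mu h21 hn) k

lemma memLp_P {E : Type*} [MeasurableSpace E] {μ : Measure E} [SigmaFinite μ] {a : ℕ → ℝ}
    {P : ℕ → Measure E} [∀ n, IsProbabilityMeasure (P n)]
    (h21 : Assumption21 μ a P) {n : ℕ} (hn : 1 ≤ n) {k : ℕ} {f : (Fin k → E) → ℝ}
    (hf : MemLp f 2 (pp μ k)) : MemLp f 2 (pp (P n) k) := by
  have hpos : 0 < (n : ℝ) / a n := div_pos (by exact_mod_cast hn) (h21.2.1 n hn)
  set c := ((n : ℝ) / a n) ^ k with hc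
  have hcpos : 0 < c := by positivity
  have h1 := (hf.mono_measure (pi_le' h21 hn k)).smul_measure
    (c := ENNReal.ofReal c⁻¹) ENNReal.ofReal_ne_top
  rw [smul_smul, ← ENNReal.ofReal_mul (by positivity), inv_mul_cancel₀ hcpos.ne'] at h1
  simpa using h1

lemma int_P {E : Type*} [MeasurableSpace E] {μ : Measure E} [SigmaFinite μ] {a : ℕ → ℝ}
    {P : ℕ → Measure E} [∀ n, IsProbabilityMeasure (P n)]
    (h21 : Assumption21 μ a P) {n : ℕ} (hn : 1 ≤ n) {k : ℕ} {f : (Fin k → E) → ℝ}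
    (hf : MemLp f 2 (pp μ k)) (S : Set (Fin k → E)) :
    ((n : ℝ) / a n) ^ k * ∫ u in S, f u ^ 2 ∂(pp (P n) k) ≤ ∫ u in S, f u ^ 2 ∂(pp μ k) := by
  have hpos : 0 < (n : ℝ) / a n := div_pos (by exact_mod_cast hn) (h21.2.1 n hn)
  have h := integral_mono_measure (f := fun u => f u ^ 2)
    (Measure.restrict_mono_measure (pi_le' h21 hn k) S)
    (Eventually.of_forall fun u => sq_nonneg _) hf.integrable_sq.integrableOn
  rw [Measure.restrict_smul, integral_smul_measure, smul_eq_mul,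
    ENNReal.toReal_ofReal (by positivity)] at h
  exact h

lemma int_P' {E : Type*} [MeasurableSpace E] {μ : Measure E} [SigmaFinite μ] {a : ℕ → ℝ}
    {P : ℕ → Measure E} [∀ n, IsProbabilityMeasure (P n)]
    (h21 : Assumption21 μ a P) {n : ℕ} (hn : 1 ≤ n) {k : ℕ} {f : (Fin k → E) → ℝ}
    (hf : MemLp f 2 (pp μ k)) :
    ((n : ℝ) / a n) ^ k * ∫ u, f u ^ 2 ∂(pp (P n) k) ≤ ∫ u, f u ^ 2 ∂(pp μ k) := by
  have := int_P h21 hn hf Set.univ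
  simpa using this

lemma norm_sq {α : Type*} [MeasurableSpace α] {ν : Measure α} {f : α → ℝ} (hf : MemLp f 2 ν) :
    (eLpNorm f 2 ν).toReal ^ 2 = ∫ x, f x ^ 2 ∂ν := by
  rw [hf.eLpNorm_eq_integral_rpow_norm (by norm_num) (by norm_num)]
  have h0 : 0 ≤ ∫ x, f x ^ 2 ∂ν := integral_nonneg fun _ => sq_nonneg _
  simp only [ENNReal.toReal_ofNat, Real.rpow_two, Real.norm_eq_abs, sq_abs]
  rw [ENNReal.toReal_ofReal (by positivity), ← Real.rpow_natCast, ← Real.rpow_mul h0]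
  norm_num

lemma symm_memLp_mu {E : Type*} [MeasurableSpace E] (μ : Measure E) [SigmaFinite μ] {k : ℕ}
    {f : (Fin k → E) → ℝ} (hf : MemLp f 2 (pp μ k)) : MemLp (symmetrize k f) 2 (pp μ k) := by
  unfold symmetrize
  have h : ∀ σ ∈ (Finset.univ : Finset (Equiv.Perm (Fin k))),
      MemLp (fun u : Fin k → E => f (u ∘ σ)) 2 (pp μ k) := by
    intro σ _
    have hm : MeasurePreserving (fun u : Fin k → E => u ∘ σ) (pp μ k) (pp μ k) := by
      refine ⟨by fun_prop, ?_⟩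
      symm
      refine Measure.pi_eq fun s hs => ?_
      rw [Measure.map_apply (by fun_prop) (MeasurableSet.univ_pi hs)]
      have : (fun u : Fin k → E => u ∘ σ) ⁻¹' Set.pi Set.univ s =
          Set.pi Set.univ fun l => s (σ.symm l) := by
        ext u
        simp only [Set.mem_preimage, Set.mem_univ_pi, Function.comp]
        exact ⟨fun h l => by simpa using h (σ.symm l), fun h l => by simpa using h (σ l)⟩
      rw [this, Measure.pi_pi]
      exact Equiv.prod_comp σ.symm fun l => μ (s l)
    exact hf.comp_measurePreserving hm
  exact (memLp_finsetSum _ h).const_mul _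

open scoped Classical in
/-- The remainder. -/
noncomputable def Rem {E : Type*} [MeasurableSpace E] (P : Measure E) (n : ℕ) (a : ℝ) (k : ℕ)
    (f : (Fin k → E) → ℝ) (x : Fin n → E) : ℝ :=
  (Real.sqrt a)⁻¹ ^ k * ∑ j : Fin k → Option (Fin n) with Valid j ∧ ¬ Full j,
      Dc n (som j)ᶜ.card (rng j).card * Psi P f j x

lemma rem_memLp {E : Type*} [MeasurableSpace E] (P : Measure E) [IsProbabilityMeasure P]
    (n : ℕ) (a : ℝ) {k : ℕ} {f : (Fin k → E) → ℝ} (hf : MemLp f 2 (pp P k)) :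
    MemLp (Rem P n a k f) 2 (pp P n) := by
  classical
  unfold Rem
  exact (memLp_finsetSum _ fun j hj =>
    (Psi_memLp P (Finset.mem_filter.1 hj).2.1 hf).const_mul _).const_mul _

lemma rem_le {E : Type*} [MeasurableSpace E] {μ : Measure E} [SigmaFinite μ] {a : ℕ → ℝ}
    {P : ℕ → Measure E} [∀ n, IsProbabilityMeasure (P n)]
    (h21 : Assumption21 μ a P) {k : ℕ} {f : (Fin k → E) → ℝ} (hf : MemLp f 2 (pp μ k)) :
    ∃ C : ℝ, 0 ≤ C ∧ ∀ n : ℕ, 1 ≤ n → ∀ B : Set E, MeasurableSet B → μ B < ∞ →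
      ∫ x, Rem (P n) n (a n) k f x ^ 2 ∂(pp (P n) n) ≤
        C * (2 * ((a n / n) * μ.real B) * ∫ u, f u ^ 2 ∂(pp μ k) +
          2 * ∑ l, ∫ u in {u : Fin k → E | u l ∈ B}ᶜ, f u ^ 2 ∂(pp μ k)) := by
  obtain ⟨C, hC, hb⟩ := rem_bound k
  refine ⟨C, hC, fun n hn B hB hBf => ?_⟩
  have han := h21.2.1 n hn
  have hn0 : (0 : ℝ) < n := by exact_mod_cast hn
  have hfP := memLp_P h21 hn hf
  have hn0' : ∀ l, 0 ≤ ∫ u in {u : Fin k → E | u l ∈ B}ᶜ, f u ^ 2 ∂(pp (P n) k) :=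
    fun l => integral_nonneg fun _ => sq_nonneg _
  have hI : 0 ≤ ∫ u, f u ^ 2 ∂(pp (P n) k) := integral_nonneg fun _ => sq_nonneg _
  have hBn : (0 : ℝ) ≤ (P n).real B := measureReal_nonneg
  have hPB : (P n).real B ≤ (a n / n) * μ.real B := by
    have h1 := le_mu h21 hn B
    rw [Measure.smul_apply, smul_eq_mul] at h1
    have h2 := ENNReal.toReal_mono hBf.ne h1
    rw [ENNReal.toReal_mul, ENNReal.toReal_ofReal (by positivity)] at h2
    have h3 : (n / a n) * (P n).real B ≤ μ.real B := h2
    rw [div_mul_eq_mul_div, div_le_iff₀ han] at h3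
    rw [div_mul_eq_mul_div, le_div_iff₀ hn0]
    linarith
  set D := 2 * (P n).real B * ∫ u, f u ^ 2 ∂(pp (P n) k) +
    2 * ∑ l, ∫ u in {u : Fin k → E | u l ∈ B}ᶜ, f u ^ 2 ∂(pp (P n) k) with hDdef
  have hD : 0 ≤ D := add_nonneg (by positivity)
    (mul_nonneg (by norm_num) (Finset.sum_nonneg fun l _ => hn0' l))
  refine (hb (P n) hn han hfP D hD ?_).trans ?_
  · intro j hv hnf
    unfold Full at hnf
    push Not at hnf
    obtain ⟨l, hl⟩ := hnf
    refine (Psi_sq_le (P n) hv hfP).trans ((Phi_sq_bound (P n) hv hfP hl hB).trans ?_)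
    rw [hDdef]
    gcongr
    exact Finset.single_le_sum (f := fun l => ∫ u in {u : Fin k → E | u l ∈ B}ᶜ, f u ^ 2 ∂(pp (P n) k))
      (fun l _ => hn0' l) (Finset.mem_univ l)
  · refine mul_le_mul_of_nonneg_left ?_ hC
    rw [hDdef]
    have e1 := int_P' h21 hn hf
    have e2 : ∀ l, _ := fun l => int_P h21 hn hf {u : Fin k → E | u l ∈ B}ᶜ
    have e3 := Finset.sum_le_sum fun l (_ : l ∈ Finset.univ) => e2 l
    rw [← Finset.mul_sum] at e3
    have hcp : 0 ≤ ((n : ℝ) / a n) ^ k := by positivity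
    calc _ = 2 * (P n).real B * (((n : ℝ) / a n) ^ k * ∫ u, f u ^ 2 ∂(pp (P n) k)) +
          2 * (((n : ℝ) / a n) ^ k *
            ∑ l, ∫ u in {u : Fin k → E | u l ∈ B}ᶜ, f u ^ 2 ∂(pp (P n) k)) := by ring
      _ ≤ _ := by
          refine add_le_add ?_ (mul_le_mul_of_nonneg_left e3 (by norm_num))
          refine mul_le_mul (by linarith) e1 (by positivity) ?_
          have : 0 ≤ a n / n * μ.real B := hBn.trans hPB
          linarith

lemma rem_tendsto {E : Type*} [MeasurableSpace E] {μ : Measure E} [SigmaFinite μ] {a : ℕ → ℝ}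
    {P : ℕ → Measure E} [∀ n, IsProbabilityMeasure (P n)]
    (h21 : Assumption21 μ a P) {k : ℕ} {f : (Fin k → E) → ℝ} (hf : MemLp f 2 (pp μ k)) :
    Tendsto (fun n => ∫ x, Rem (P n) n (a n) k f x ^ 2 ∂(pp (P n) n)) atTop (𝓝 0) := by
  obtain ⟨C, hC, hb⟩ := rem_le h21 hf
  have hT : Tendsto (fun N : ℕ => C * (2 * ∑ l : Fin k,
      ∫ u in {u : Fin k → E | u l ∈ spanningSets μ N}ᶜ, f u ^ 2 ∂(pp μ k))) atTop (𝓝 0) := by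
    have h1 : ∀ l : Fin k, Tendsto (fun N : ℕ =>
        ∫ u in {u : Fin k → E | u l ∈ spanningSets μ N}ᶜ, f u ^ 2 ∂(pp μ k)) atTop (𝓝 0) := by
      intro l
      have := tendsto_setIntegral_of_antitone (μ := pp μ k) (f := fun u => f u ^ 2)
        (s := fun N : ℕ => {u : Fin k → E | u l ∈ spanningSets μ N}ᶜ)
        (fun N => ((measurable_pi_apply l) (measurableSet_spanningSets μ N)).compl)
        (fun N M hNM u hu hu' => hu (monotone_spanningSets μ hNM hu'))
        ⟨0, hf.integrable_sq.integrableOn⟩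
      have he : (⋂ N : ℕ, {u : Fin k → E | u l ∈ spanningSets μ N}ᶜ) = ∅ := by
        rw [Set.eq_empty_iff_forall_notMem]
        intro u hu
        rw [Set.mem_iInter] at hu
        have : u l ∈ ⋃ N, spanningSets μ N := by rw [iUnion_spanningSets]; trivial
        obtain ⟨N, hN⟩ := Set.mem_iUnion.1 this
        exact hu N hN
      rw [he] at this
      simpa using this
    have h2 := ((tendsto_finsetSum Finset.univ fun l _ => h1 l).const_mul 2).const_mul C
    simpa using h2
  rw [Metric.tendsto_atTop]
  intro ε hε
  obtain ⟨N, hN⟩ := ((tendsto_order.1 hT).2 (ε / 2) (by positivity)).exists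
  have hT2 : Tendsto (fun n : ℕ => C * (2 * ((a n / n) * μ.real (spanningSets μ N)) *
      ∫ u, f u ^ 2 ∂(pp μ k))) atTop (𝓝 0) := by
    have := ((((h21.2.2.2.1.mul_const (μ.real (spanningSets μ N))).const_mul 2).mul_const
      (∫ u, f u ^ 2 ∂(pp μ k))).const_mul C)
    simpa using this
  have h3 := (tendsto_order.1 hT2).2 (ε / 2) (by positivity)
  obtain ⟨n0, hn0⟩ := eventually_atTop.1 (h3.and (eventually_ge_atTop 1))
  refine ⟨n0, fun n hn => ?_⟩
  obtain ⟨h4, h5⟩ := hn0 n hn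
  have h6 := hb n h5 _ (measurableSet_spanningSets μ N) (measure_spanningSets_lt_top μ N)
  have h7 : 0 ≤ ∫ x, Rem (P n) n (a n) k f x ^ 2 ∂(pp (P n) n) :=
    integral_nonneg fun _ => sq_nonneg _
  rw [Real.dist_eq, sub_zero, abs_of_nonneg h7]
  rw [mul_add] at h6
  linarith

end TSM

namespace TSM

lemma Dc_full {n k : ℕ} {j : Fin k → Option (Fin n)} (hf : Full j) (c : ℕ) :
    Dc n (som j)ᶜ.card c = 1 := by
  have : (som j)ᶜ = ∅ := by
    ext l; simp [som, hf l]
  rw [this]; rfl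

lemma total_bound {E : Type*} [MeasurableSpace E] (P : Measure E) [IsProbabilityMeasure P]
    [NullSingletonClass P] (hdiag : MeasurableSet {p : E × E | p.1 = p.2}) {n : ℕ} {a : ℝ}
    (ha : 0 < a) {h : (k : ℕ) → (Fin k → E) → ℝ} (hh : ∀ k, MemLp (h k) 2 (pp P k))
    (s : Finset ℕ) :
    AEStronglyMeasurable (fun x => (∑ k ∈ s, empInt P n a x k (h k)) ^ 2) (pp P n) ∧
    ∫ x, (∑ k ∈ s, empInt P n a x k (h k)) ^ 2 ∂(pp P n) ≤
      2 * ∑ k ∈ s, k.factorial * ((n / a) ^ k * ∫ u, symmetrize k (h k) u ^ 2 ∂(pp P k)) +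
      2 * (s.card * ∑ k ∈ s, ∫ x, Rem P n a k (h k) x ^ 2 ∂(pp P n)) := by
  classical
  set G : (Fin n → E) → ℝ := fun x => ∑ k ∈ s, (Real.sqrt a)⁻¹ ^ k *
      ∑ j : Fin k → Option (Fin n) with Valid j ∧ Full j, Psi P (h k) j x with hGdef
  have hG : MemLp G 2 (pp P n) := memLp_finsetSum _ fun k _ =>
    (memLp_finsetSum _ fun j hj => Psi_memLp P (Finset.mem_filter.1 hj).2.1 (hh k)).const_mul _
  have hR : ∀ k, MemLp (Rem P n a k (h k)) 2 (pp P n) := fun k => rem_memLp P n a (hh k)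
  have hRs : MemLp (fun x => ∑ k ∈ s, Rem P n a k (h k) x) 2 (pp P n) :=
    memLp_finsetSum _ fun k _ => hR k
  have hae : ∀ᵐ x ∂(pp P n), ∀ k ∈ s, empInt P n a x k (h k) = (Real.sqrt a)⁻¹ ^ k *
      ∑ j : Fin k → Option (Fin n) with Valid j, (∏ l, wt n (j l)) * Phi P (h k) j x := by
    rw [Filter.eventually_all_finset]
    intro k _
    filter_upwards [empInt_eq P hdiag (n := n) a (hh k)] with x hx
    convert hx
  have hae2 : (fun x => (∑ k ∈ s, empInt P n a x k (h k)) ^ 2) =ᵐ[pp P n]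
      fun x => (G x + ∑ k ∈ s, Rem P n a k (h k) x) ^ 2 := by
    filter_upwards [hae] with x hx
    congr 1
    rw [hGdef, ← Finset.sum_add_distrib]
    refine Finset.sum_congr rfl fun k hk => ?_
    rw [hx k hk]
    have e := hoeffding (n := n) (k := k) (fun j => Phi P (h k) j x)
    have e' : ∑ j : Fin k → Option (Fin n) with Valid j, (∏ l, wt n (j l)) * Phi P (h k) j x =
        ∑ j : Fin k → Option (Fin n) with Valid j,
          Dc n (som j)ᶜ.card (rng j).card * Psi P (h k) j x := by
      exact e
    rw [e', ← Finset.sum_filter_add_sum_filter_not _ (fun j => Full j), Finset.filter_filter,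
      Finset.filter_filter, mul_add]
    congr 1
    · congr 1
      refine Finset.sum_congr rfl fun j hj => ?_
      rw [Dc_full (Finset.mem_filter.1 hj).2.2, one_mul]
  have hsum : MemLp (fun x => G x + ∑ k ∈ s, Rem P n a k (h k) x) 2 (pp P n) := hG.add hRs
  refine ⟨(hsum.1.pow 2).congr hae2.symm, ?_⟩
  rw [integral_congr_ae hae2]
  have i1 : Integrable (fun x => 2 * G x ^ 2) (pp P n) := hG.integrable_sq.const_mul 2
  have i2 : ∀ k ∈ s, Integrable (fun x => Rem P n a k (h k) x ^ 2) (pp P n) :=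
    fun k _ => (hR k).integrable_sq
  have i3 : Integrable (fun x => 2 * (s.card * ∑ k ∈ s, Rem P n a k (h k) x ^ 2)) (pp P n) :=
    ((integrable_finsetSum _ i2).const_mul _).const_mul _
  calc ∫ x, (G x + ∑ k ∈ s, Rem P n a k (h k) x) ^ 2 ∂(pp P n)
      ≤ ∫ x, (2 * G x ^ 2 + 2 * (s.card * ∑ k ∈ s, Rem P n a k (h k) x ^ 2)) ∂(pp P n) := by
        refine integral_mono hsum.integrable_sq (i1.add i3) fun x => ?_
        have e1 : (∑ k ∈ s, Rem P n a k (h k) x) ^ 2 ≤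
          s.card * ∑ k ∈ s, Rem P n a k (h k) x ^ 2 := sq_sum_le_card_mul_sum_sq
        have e2 := sq_nonneg (G x - ∑ k ∈ s, Rem P n a k (h k) x)
        show (G x + ∑ k ∈ s, Rem P n a k (h k) x) ^ 2 ≤
          2 * G x ^ 2 + 2 * (s.card * ∑ k ∈ s, Rem P n a k (h k) x ^ 2)
        nlinarith
    _ = 2 * ∫ x, G x ^ 2 ∂(pp P n) +
        2 * (s.card * ∑ k ∈ s, ∫ x, Rem P n a k (h k) x ^ 2 ∂(pp P n)) := by
        rw [integral_add i1 i3, integral_const_mul, integral_const_mul, integral_const_mul,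
          integral_finsetSum _ i2]
    _ ≤ _ := by
        have := main_bound P (n := n) ha hh s
        refine add_le_add (mul_le_mul_of_nonneg_left ?_ (by norm_num)) le_rfl
        convert this

lemma choose_K (r : ℕ → ℕ → ℝ) (hr0 : ∀ k n, 0 ≤ r k n)
    (hr : ∀ k, Tendsto (r k) atTop (𝓝 0)) :
    ∃ K : ℕ → ℕ, Monotone K ∧ (∀ n, 1 ≤ K n) ∧ Tendsto K atTop atTop ∧
      Tendsto (fun n => (K n : ℝ) * ∑ k ∈ Finset.range (K n + 1), r k n) atTop (𝓝 0) := by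
  classical
  have hp : ∀ K : ℕ, ∀ᶠ N in atTop, ∀ n ≥ N,
      ((K + 1 : ℕ) : ℝ) * ∑ k ∈ Finset.range (K + 1 + 1), r k n ≤ 1 / ((K : ℝ) + 1) := by
    intro K
    rw [eventually_forall_ge_atTop]
    have : Tendsto (fun n => ((K + 1 : ℕ) : ℝ) * ∑ k ∈ Finset.range (K + 1 + 1), r k n)
        atTop (𝓝 0) := by
      have := (tendsto_finsetSum (Finset.range (K + 1 + 1)) fun k _ => hr k).const_mul
        ((K + 1 : ℕ) : ℝ)
      simpa using this
    filter_upwards [(tendsto_order.1 this).2 (1 / ((K : ℝ) + 1)) (by positivity)] with n hn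
    exact hn.le
  obtain ⟨φ, hφ, hφ2⟩ := extraction_forall_of_eventually hp
  set g : ℕ → ℕ := fun n => Nat.findGreatest (fun K => φ K ≤ n) n with hg
  have hgm : Monotone g := by
    intro n m hnm
    exact Nat.findGreatest_mono (fun K hK => hK.trans hnm) hnm
  have hgt : Tendsto g atTop atTop := by
    refine tendsto_atTop_atTop.2 fun N => ⟨φ N, fun n hn => ?_⟩
    exact Nat.le_findGreatest ((hφ.id_le N).trans hn) hn
  refine ⟨fun n => g n + 1, fun n m hnm => Nat.succ_le_succ (hgm hnm), fun n => by simp,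
    tendsto_atTop_mono (fun n => Nat.le_succ (g n)) hgt, ?_⟩
  refine squeeze_zero' (g := fun n => 1 / ((g n : ℝ) + 1)) ?_ ?_
    (tendsto_one_div_add_atTop_nhds_zero_nat.comp hgt)
  · exact Eventually.of_forall fun n => mul_nonneg (by positivity)
      (Finset.sum_nonneg fun k _ => hr0 k n)
  · filter_upwards [eventually_ge_atTop (φ 0)] with n hn
    refine hφ2 (g n) n ?_
    exact Nat.findGreatest_spec (P := fun K => φ K ≤ n) (m := 0) (Nat.zero_le n) hn

lemma limsup_tail (V : ℕ → ℕ → ℝ) (hV : ∀ m n, 0 ≤ V m n) (t : ℕ → ℝ) (ht0 : ∀ k, 0 ≤ t k)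
    (ht : Summable t) (K : ℕ → ℕ) (e : ℕ → ℝ) (he : Tendsto e atTop (𝓝 0))
    (hb : ∀ m, ∀ᶠ n in atTop, V m n ≤ 2 * ∑ k ∈ Finset.Ioc m (K n), t k + e n) :
    Tendsto (fun m => limsup (fun n => V m n) atTop) atTop (𝓝 0) := by
  set T : ℕ → ℝ := fun m => ∑' k, t (k + m) with hT
  have hTt : Tendsto T atTop (𝓝 0) := tendsto_sum_nat_add t
  have hsum : ∀ m M, ∑ k ∈ Finset.Ioc m M, t k ≤ T m := by
    intro m M
    have h1 := ht.sum_add_tsum_nat_add m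
    have hd : Disjoint (Finset.range m) (Finset.Ioc m M) := by
      rw [Finset.disjoint_left]
      intro k hk hk'
      have := Finset.mem_range.1 hk
      have := (Finset.mem_Ioc.1 hk').1
      omega
    have h2 := ht.sum_le_tsum (Finset.range m ∪ Finset.Ioc m M) (fun k _ => ht0 k)
    rw [Finset.sum_union hd] at h2
    have : T m = ∑' k, t (k + m) := rfl
    linarith
  have hb' : ∀ m, ∀ᶠ n in atTop, V m n ≤ 2 * T m + e n := by
    intro m
    filter_upwards [hb m] with n hn
    have := hsum m (K n)
    linarith
  have hlim : ∀ m, Tendsto (fun n => 2 * T m + e n) atTop (𝓝 (2 * T m)) := by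
    intro m
    simpa using he.const_add (2 * T m)
  have hbd : ∀ m, IsBoundedUnder (· ≤ ·) atTop (fun n => V m n) := fun m =>
    (hlim m).isBoundedUnder_le.mono_le (hb' m)
  have hcob : ∀ m, IsCoboundedUnder (· ≤ ·) atTop (fun n => V m n) := fun m =>
    IsBoundedUnder.isCoboundedUnder_le ⟨0, Filter.eventually_map.2 (Eventually.of_forall (hV m))⟩
  refine squeeze_zero (g := fun m => 2 * T m) (fun m => ?_) (fun m => ?_)
    (by simpa using hTt.const_mul 2)
  · exact le_limsup_of_frequently_le (Eventually.of_forall (hV m)).frequently (hbd m)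
  · rw [← (hlim m).limsup_eq]
    exact limsup_le_limsup (hb' m) (hcob m) (hlim m).isBoundedUnder_le

end TSM

/-- Under Assumption 2.1, for `h = (h^{(k)})_k ∈ H` there is a
nondecreasing sequence of positive integers `K_n → ∞` such that
`lim_{m→∞} limsup_{n→∞} 𝔼[(Σ_{k=m+1}^{K_n} I_k^{(n)}(h^{(k)}))²] = 0`. -/
theorem tail_second_moment_vanishes
    {E Ω : Type*} [MeasurableSpace E] [MeasurableSpace Ω]
    (μ : Measure E) [SigmaFinite μ] [NullSingletonClass μ]
    (a : ℕ → ℝ) (P : ℕ → Measure E) [∀ n, IsProbabilityMeasure (P n)]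
    (h21 : Assumption21 μ a P)
    (Pr : Measure Ω) [IsProbabilityMeasure Pr]
    (X : (n : ℕ) → Fin n → Ω → E)
    (hXmeas : ∀ n j, Measurable (X n j))
    (hXlaw : ∀ n : ℕ, 1 ≤ n → ∀ j, Measure.map (X n j) Pr = P n)
    (hXindep : ∀ n : ℕ, iIndepFun (X n) Pr)
    (hdiag : MeasurableSet {p : E × E | p.1 = p.2})
    (h : (k : ℕ) → (Fin k → E) → ℝ)
    (hmem : ∀ k : ℕ, MemLp (h k) 2 (Measure.pi fun _ : Fin k => μ))
    (hH : Summable (fun k : ℕ => (k.factorial : ℝ) *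
      ((eLpNorm (symmetrize k (h k)) 2 (Measure.pi fun _ : Fin k => μ)).toReal) ^ 2)) :
    ∃ K : ℕ → ℕ, Monotone K ∧ (∀ n, 1 ≤ K n) ∧ Tendsto K atTop atTop ∧
      Tendsto (fun m : ℕ =>
          Filter.limsup (fun n : ℕ =>
            ∫ ω, (∑ k ∈ Finset.Ioc m (K n),
              empInt (P n) n (a n) (fun j => X n j ω) k (h k)) ^ 2 ∂Pr) atTop)
        atTop (𝓝 0) := by
  have hmem' : ∀ k, MemLp (h k) 2 (TSM.pp μ k) := hmem
  have hS : ∀ k, MemLp (symmetrize k (h k)) 2 (TSM.pp μ k) :=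
    fun k => TSM.symm_memLp_mu μ (hmem' k)
  obtain ⟨K, hK1, hK2, hK3, hK4⟩ := TSM.choose_K
    (fun k n => ∫ x, TSM.Rem (P n) n (a n) k (h k) x ^ 2 ∂(TSM.pp (P n) n))
    (fun k n => integral_nonneg fun _ => sq_nonneg _)
    (fun k => TSM.rem_tendsto h21 (hmem' k))
  refine ⟨K, hK1, hK2, hK3, ?_⟩
  refine TSM.limsup_tail _ (fun m n => integral_nonneg fun _ => sq_nonneg _) _
    (fun k => by positivity) hH K _ (by simpa using hK4.const_mul 2) fun m => ?_
  filter_upwards [eventually_ge_atTop 1] with n hn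
  have han := h21.2.1 n hn
  have hn0 : (0 : ℝ) < n := by exact_mod_cast hn
  have := TSM.null_P h21 hn
  have hh : ∀ k, MemLp (h k) 2 (TSM.pp (P n) k) := fun k => TSM.memLp_P h21 hn (hmem' k)
  obtain ⟨hm, hle⟩ := TSM.total_bound (P n) hdiag (n := n) han hh (Finset.Ioc m (K n))
  have hmap : Measure.map (fun ω j => X n j ω) Pr = TSM.pp (P n) n := by
    have h1 := (iIndepFun_iff_map_fun_eq_pi_map fun j => (hXmeas n j).aemeasurable).1 (hXindep n)
    rw [h1]
    simp only [hXlaw n hn]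
  have hXm : Measurable (fun ω j => X n j ω) := measurable_pi_lambda _ fun j => hXmeas n j
  have hintg := integral_map (μ := Pr) hXm.aemeasurable (by rw [hmap]; exact hm)
  rw [hmap] at hintg
  rw [← hintg]
  refine hle.trans (add_le_add (mul_le_mul_of_nonneg_left ?_ (by norm_num))
    (mul_le_mul_of_nonneg_left ?_ (by norm_num)))
  · refine Finset.sum_le_sum fun k _ => ?_
    refine mul_le_mul_of_nonneg_left ?_ (by positivity)
    refine (TSM.int_P' h21 hn (hS k)).trans (TSM.norm_sq (hS k)).ge
  · refine mul_le_mul ?_ ?_ (Finset.sum_nonneg fun k _ => integral_nonneg fun _ => sq_nonneg _)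
      (by positivity)
    · rw [Nat.card_Ioc]
      exact_mod_cast Nat.sub_le _ _
    · refine Finset.sum_le_sum_of_subset_of_nonneg ?_
        fun k _ _ => integral_nonneg fun _ => sq_nonneg _
      intro k hk
      have := (Finset.mem_Ioc.1 hk).2
      exact Finset.mem_range.2 (by omega)
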